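/- arXiv:1609.09480 — 5 statements merged into one kernel-verified Lean document; each statement's English description precedes it below -/
import Mathlib

section
/- Let (X,d) be a good discrete hyperbolic space, δ-hyperbolic for an integer δ ≥ 1, equipped with an isometric action of a group G. Then there exists a map assigning to each pair (x,a) ∈ X × X a finitely supported probability measure μ_x(a) on X, which is G-equivariant (μ_{g·x}(g·a)(g·y) = μ_x(a)(y) for all g ∈ G and x,a,y ∈ X) and such that: (i) supp μ_x(a) ⊆ B(a,4δ) ∩ 2δ-geod(x,a), and even supp μ_x(a) ⊆ S(a,4δ) ∩ 2δ-geod(x,a) whenever d(x,a) ≥ 4δ; (ii) there exist reals ε > 0 and C > 0 such that for all x, x', a ∈ X with d(x,x') = 1, ‖μ_x(a) − μ_{x'}(a)‖₁ ≤ C·exp(−ε·d(x,a)); (iii) there exist a real η > 0 and N ∈ ℕ such that for all x, x' ∈ X with d(x,x') ≥ N, the set of points a ∈ X for which supp μ_x(a) and supp μ_{x'}(a) are disjoint is finite of cardinality at least η·d(x,x'). -/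
namespace DiscreteHyperbolic

open Finsupp

section FiniteSignedMeasures

variable {X : Type*}

/-- The total mass of a finitely supported signed measure. -/
noncomputable def mass : (X →₀ ℝ) →ₗ[ℝ] ℝ := linearCombination ℝ fun _ => 1

/-- The `ℓ¹` norm of a finitely supported signed measure. -/
noncomputable def l1Norm (σ : X →₀ ℝ) : ℝ := ∑ᶠ y, |σ y|

/-- A finitely supported probability measure. -/
def IsProb (ν : X →₀ ℝ) : Prop := (∀ y, 0 ≤ ν y) ∧ mass ν = 1

/-- The uniform probability measure on a finite set. -/
noncomputable def unif (S : Set X) : X →₀ ℝ := ∑ᶠ z ∈ S, single z (S.ncard : ℝ)⁻¹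

lemma l1Norm_eq_sum {σ : X →₀ ℝ} {s : Finset X} (h : σ.support ⊆ s) :
    l1Norm σ = ∑ y ∈ s, |σ y| := by
  refine finsum_eq_sum_of_support_subset _ fun y hy => h ?_
  simpa using hy

lemma mass_single (z : X) (c : ℝ) : mass (single z c) = c := by simp [mass]

lemma mass_eq_finsum (σ : X →₀ ℝ) : mass σ = ∑ᶠ y, σ y := by
  rw [finsum_eq_sum_of_support_subset _ (s := σ.support) (fun y hy => by simpa using hy)]
  simp [mass, linearCombination_apply, Finsupp.sum]

lemma l1Norm_eq_mass {σ : X →₀ ℝ} (h : ∀ y, 0 ≤ σ y) : l1Norm σ = mass σ := by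
  rw [mass_eq_finsum, l1Norm]
  exact finsum_congr fun y => abs_of_nonneg (h y)

lemma IsProb.l1Norm_eq {ν : X →₀ ℝ} (h : IsProb ν) : l1Norm ν = 1 := by
  rw [l1Norm_eq_mass h.1, h.2]

lemma l1Norm_zero : l1Norm (0 : X →₀ ℝ) = 0 := by simp [l1Norm]

lemma l1Norm_smul (c : ℝ) (σ : X →₀ ℝ) : l1Norm (c • σ) = |c| * l1Norm σ := by
  rw [l1Norm_eq_sum (support_smul (b := c) (g := σ)), l1Norm_eq_sum (Finset.Subset.refl σ.support),
    Finset.mul_sum]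
  simp [abs_mul]

lemma l1Norm_add_le (σ τ : X →₀ ℝ) : l1Norm (σ + τ) ≤ l1Norm σ + l1Norm τ := by
  classical
  rw [l1Norm_eq_sum (support_add (g₁ := σ) (g₂ := τ)),
    l1Norm_eq_sum (Finset.subset_union_left (s₁ := σ.support) (s₂ := τ.support)),
    l1Norm_eq_sum (Finset.subset_union_right (s₁ := σ.support) (s₂ := τ.support)),
    ← Finset.sum_add_distrib]
  exact Finset.sum_le_sum fun y _ => abs_add_le _ _

lemma l1Norm_sub_le (σ τ : X →₀ ℝ) : l1Norm (σ - τ) ≤ l1Norm σ + l1Norm τ := by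
  have := l1Norm_add_le σ ((-1 : ℝ) • τ)
  rw [l1Norm_smul] at this
  simpa [sub_eq_add_neg] using this

lemma l1Norm_linearCombination_le (f : X → X →₀ ℝ) {σ : X →₀ ℝ} {q : ℝ}
    (h : ∀ y ∈ σ.support, l1Norm (f y) ≤ q) :
    l1Norm (linearCombination ℝ f σ) ≤ q * l1Norm σ := by
  rw [linearCombination_apply, Finsupp.sum]
  refine (Finset.le_sum_of_subadditive l1Norm l1Norm_zero.le l1Norm_add_le _ _).trans ?_
  rw [l1Norm_eq_sum (Finset.Subset.refl σ.support), Finset.mul_sum]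
  refine Finset.sum_le_sum fun y hy => ?_
  rw [l1Norm_smul, mul_comm]
  exact mul_le_mul_of_nonneg_right (h y hy) (abs_nonneg _)

lemma mass_linearCombination {f : X → X →₀ ℝ} {σ : X →₀ ℝ}
    (h : ∀ y ∈ σ.support, mass (f y) = 1) : mass (linearCombination ℝ f σ) = mass σ := by
  rw [linearCombination_apply, Finsupp.sum, map_sum]
  have hσ : mass σ = ∑ y ∈ σ.support, σ y := by simp [mass, linearCombination_apply, Finsupp.sum]
  rw [hσ]
  refine Finset.sum_congr rfl fun y hy => ?_
  rw [map_smul, h y hy, smul_eq_mul, mul_one]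

lemma IsProb.linearCombination {f : X → X →₀ ℝ} {ν : X →₀ ℝ} (hν : IsProb ν)
    (h : ∀ y ∈ ν.support, IsProb (f y)) : IsProb (linearCombination ℝ f ν) := by
  refine ⟨fun z => ?_, by rw [mass_linearCombination fun y hy => (h y hy).2, hν.2]⟩
  rw [linearCombination_apply, Finsupp.sum, finsetSum_apply]
  exact Finset.sum_nonneg fun y hy => mul_nonneg (hν.1 y) ((h y hy).1 z)

lemma exists_of_linearCombination_ne_zero {f : X → X →₀ ℝ} {σ : X →₀ ℝ} {z : X}
    (h : linearCombination ℝ f σ z ≠ 0) : ∃ y, σ y ≠ 0 ∧ f y z ≠ 0 := by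
  rw [linearCombination_apply, Finsupp.sum, finsetSum_apply] at h
  obtain ⟨y, -, hy⟩ := Finset.exists_ne_zero_of_sum_ne_zero h
  exact ⟨y, left_ne_zero_of_mul hy, right_ne_zero_of_mul hy⟩

/-- A family of probability measures which all charge a common point by at least `c` contracts
signed measures of mass zero by the factor `1 - c`. -/
lemma l1Norm_linearCombination_le_of_minorized {f : X → X →₀ ℝ} {σ : X →₀ ℝ} {c : ℝ} {z₀ : X}
    (hσ : mass σ = 0) (hf : ∀ y ∈ σ.support, IsProb (f y)) (hc : ∀ y ∈ σ.support, c ≤ f y z₀) :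
    l1Norm (linearCombination ℝ f σ) ≤ (1 - c) * l1Norm σ := by
  classical
  have heq : linearCombination ℝ f σ = linearCombination ℝ (fun y => f y - single z₀ c) σ := by
    have hconst : linearCombination ℝ (fun _ : X => single z₀ c) σ = 0 := by
      have : σ.sum (fun _ v => v) = 0 := by simpa [mass, linearCombination_apply] using hσ
      rw [linearCombination_apply, Finsupp.sum, ← Finset.sum_smul]
      rw [Finsupp.sum] at this
      rw [this, zero_smul]
    rw [← sub_zero (linearCombination ℝ f σ), ← hconst]
    simp [linearCombination_apply, Finsupp.sum, smul_sub]
  rw [heq]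
  refine l1Norm_linearCombination_le _ fun y hy => ?_
  rw [l1Norm_eq_mass, map_sub, (hf y hy).2, mass_single]
  intro z
  rw [Finsupp.sub_apply, single_apply]
  split_ifs with h
  · subst h
    exact sub_nonneg.2 (hc y hy)
  · simpa using (hf y hy).1 z

lemma unif_coe (s : Finset X) : unif (s : Set X) = ∑ z ∈ s, single z (s.card : ℝ)⁻¹ := by
  rw [unif, finsum_mem_coe_finset, Set.ncard_coe_finset]

lemma unif_apply_of_mem {S : Set X} (hS : S.Finite) {z : X} (hz : z ∈ S) :
    unif S z = (S.ncard : ℝ)⁻¹ := by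
  classical
  lift S to Finset X using hS
  rw [unif_coe, finsetSum_apply, Set.ncard_coe_finset]
  simp only [single_apply, Finset.sum_ite_eq']
  exact if_pos hz

lemma unif_apply_of_notMem {S : Set X} (hS : S.Finite) {z : X} (hz : z ∉ S) : unif S z = 0 := by
  classical
  lift S to Finset X using hS
  rw [unif_coe, finsetSum_apply]
  simp only [single_apply, Finset.sum_ite_eq']
  exact if_neg hz

lemma isProb_unif {S : Set X} (hS : S.Finite) (hne : S.Nonempty) : IsProb (unif S) := by
  constructor
  · intro z
    by_cases hz : z ∈ S
    · rw [unif_apply_of_mem hS hz]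
      positivity
    · rw [unif_apply_of_notMem hS hz]
  · lift S to Finset X using hS
    rw [unif_coe, map_sum]
    simp only [mass_single, Finset.sum_const, nsmul_eq_mul]
    exact mul_inv_cancel₀ (by exact_mod_cast (Finset.card_pos.2 hne).ne')

lemma mapDomain_unif {f : X → X} (hf : f.Injective) {S : Set X} (hS : S.Finite) :
    mapDomain f (unif S) = unif (f '' S) := by
  classical
  lift S to Finset X using hS
  rw [← Finset.coe_image, unif_coe, unif_coe, Finset.card_image_of_injective _ hf,
    Finset.sum_image hf.injOn, mapDomain_finsetSum]
  simp [mapDomain_single]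

lemma l1Norm_sub_of_disjoint {ν ν' : X →₀ ℝ} (hν : IsProb ν) (hν' : IsProb ν')
    (h : ∀ y, ν y = 0 ∨ ν' y = 0) : l1Norm (ν - ν') = 2 := by
  have : l1Norm (ν - ν') = l1Norm (ν + ν') := finsum_congr fun y => by
    rcases h y with h | h <;> simp [h]
  rw [this, l1Norm_eq_mass fun y => add_nonneg (hν.1 y) (hν'.1 y), map_add, hν.2, hν'.2]
  norm_num

end FiniteSignedMeasures

section Tubes

variable {X : Type*} [MetricSpace X]

/-- The points at distance `l` from `a` which are `s`-almost on a geodesic from `x` to `a`. -/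
def tube (x a : X) (l s : ℝ) : Set X := {y | dist a y = l ∧ dist x y ≤ dist x a - l + s}

lemma tube_finite (hfin : ∀ (a : X) (r : ℝ), (Metric.closedBall a r).Finite) (x a : X)
    (l s : ℝ) : (tube x a l s).Finite :=
  (hfin a l).subset fun y hy => by
    rw [Metric.mem_closedBall, dist_comm]
    exact hy.1.le

lemma nonempty_tube_zero
    (hgeo : ∀ x y : X, ∀ k : ℕ, (k : ℝ) ≤ dist x y →
      ∃ z : X, dist x z = k ∧ dist z y = dist x y - k)
    {x a : X} {l : ℕ} (hl : (l : ℝ) ≤ dist x a) : (tube x a l 0).Nonempty := by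
  obtain ⟨z, hz, hz'⟩ := hgeo a x l (by rwa [dist_comm])
  exact ⟨z, hz, by rw [dist_comm x z, hz', dist_comm a x, add_zero]⟩

lemma tube_mono {x a : X} {l s t : ℝ} (h : s ≤ t) : tube x a l s ⊆ tube x a l t :=
  fun _ hy => ⟨hy.1, hy.2.trans (by linarith)⟩

lemma image_tube {f : X → X} (hf : f.Surjective) (hd : ∀ x y, dist (f x) (f y) = dist x y)
    (x a : X) (l s : ℝ) : f '' tube x a l s = tube (f x) (f a) l s := by
  ext z
  obtain ⟨y, rfl⟩ := hf z
  have hinj : f.Injective := fun u v huv => by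
    rw [← dist_eq_zero, ← hd, huv, dist_self]
  simp [hinj.mem_set_image, tube, hd]

lemma mem_tube_trans {δ : ℝ} (hδ : 0 ≤ δ)
    (hhyp : ∀ x₁ x₂ x₃ x₄ : X, dist x₁ x₄ + dist x₂ x₃ ≤
      max (dist x₁ x₂ + dist x₃ x₄) (dist x₁ x₃ + dist x₂ x₄) + δ)
    {x a y z : X} {l m s : ℝ} (hs : 2 * δ ≤ s) (hlm : l + δ ≤ m)
    (hy : y ∈ tube x a m s) (hz : z ∈ tube y a l δ) : z ∈ tube x a l s := by
  obtain ⟨hy₁, hy₂⟩ := hy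
  obtain ⟨hz₁, hz₂⟩ := hz
  refine ⟨hz₁, ?_⟩
  have h := hhyp x y a z
  rw [dist_comm y a] at *
  have : max (dist x y + dist a z) (dist x a + dist y z) ≤ dist x a + m - l + s - δ :=
    max_le (by linarith) (by linarith)
  linarith

/-- All points of a tube have a common point in their descending tubes. -/
lemma exists_mem_forall_tube {δ : ℝ}
    (hgeo : ∀ x y : X, ∀ k : ℕ, (k : ℝ) ≤ dist x y →
      ∃ z : X, dist x z = k ∧ dist z y = dist x y - k)
    (hhyp : ∀ x₁ x₂ x₃ x₄ : X, dist x₁ x₄ + dist x₂ x₃ ≤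
      max (dist x₁ x₂ + dist x₃ x₄) (dist x₁ x₃ + dist x₂ x₄) + δ)
    {x a : X} {l : ℕ} {m s : ℝ} (hlm : l ≤ m) (hs : s + δ ≤ 2 * (m - l))
    (hne : (tube x a m s).Nonempty) :
    ∃ z₀, ∀ y ∈ tube x a m s, z₀ ∈ tube y a l δ := by
  obtain ⟨y₀, hy₀, hy₀'⟩ := hne
  obtain ⟨z, hz, hz'⟩ := nonempty_tube_zero hgeo (x := y₀) (a := a) (l := l)
    (by rwa [dist_comm, hy₀])
  refine ⟨z, fun y hy => ⟨hz, ?_⟩⟩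
  obtain ⟨hy, hy'⟩ := hy
  have h₁ := hhyp y a x y₀
  have h₂ := hhyp y y₀ a z
  have h₃ : dist y y₀ ≤ s + δ := by
    have : max (dist y a + dist x y₀) (dist y x + dist a y₀) ≤ dist x a + s := by
      rw [dist_comm y a, dist_comm y x]
      exact max_le (by linarith) (by linarith)
    rw [dist_comm a x] at h₁
    linarith
  rw [dist_comm y a] at *
  rw [dist_comm y₀ a] at *
  have : max (dist y y₀ + dist a z) (dist a y + dist y₀ z) ≤ 2 * m - l :=
    max_le (by linarith) (by linarith)
  linarith

end Tubes

section Descent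

variable {X : Type*} [MetricSpace X]

/-- The radii of the spheres around the target used by the descent. -/
def level (δ j : ℕ) : ℕ := 4 * δ + 3 * δ * j

/-- One step of the random descent towards `a`, down to the sphere of radius `l`. -/
noncomputable def step (δ : ℕ) (a : X) (l : ℕ) : (X →₀ ℝ) →ₗ[ℝ] (X →₀ ℝ) :=
  linearCombination ℝ fun y => unif (tube y a l δ)

/-- The random descent towards `a` from level `j` to level `0`. -/
noncomputable def descent (δ : ℕ) (a : X) : ℕ → (X →₀ ℝ) →ₗ[ℝ] (X →₀ ℝ)
  | 0 => LinearMap.id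
  | j + 1 => descent δ a j ∘ₗ step δ a (level δ j)

/-- The largest `j` such that `level δ j ≤ dist x a`, when `4 * δ ≤ dist x a`. -/
noncomputable def startLevel (δ : ℕ) (x a : X) : ℕ := (⌊dist x a⌋₊ - 4 * δ) / (3 * δ)

open Classical in
/-- The law of the end point of the random descent from `x` towards `a`. -/
noncomputable def endMeasure (δ : ℕ) (x a : X) : X →₀ ℝ :=
  if 4 * (δ : ℝ) ≤ dist x a then
    descent δ a (startLevel δ x a) (unif (tube x a (level δ (startLevel δ x a)) δ))
  else single x 1


lemma level_succ (δ j : ℕ) : (level δ (j + 1) : ℝ) = level δ j + 3 * δ := by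
  simp only [level]
  push_cast
  ring

lemma level_startLevel_le {δ : ℕ} {x a : X} (h : 4 * (δ : ℝ) ≤ dist x a) :
    (level δ (startLevel δ x a) : ℝ) ≤ dist x a := by
  have h₁ : 4 * δ ≤ ⌊dist x a⌋₊ := Nat.le_floor (by exact_mod_cast h)
  have h₂ := Nat.mul_div_le (⌊dist x a⌋₊ - 4 * δ) (3 * δ)
  have h₃ : level δ (startLevel δ x a) ≤ ⌊dist x a⌋₊ := by
    simp only [level, startLevel]
    omega
  exact (Nat.cast_le.2 h₃).trans (Nat.floor_le dist_nonneg)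

lemma dist_le_level_startLevel {δ : ℕ} (hδ : 1 ≤ δ) (x a : X) :
    dist x a ≤ level δ (startLevel δ x a + 1) := by
  have h₂ := Nat.lt_mul_div_succ (⌊dist x a⌋₊ - 4 * δ) (b := 3 * δ) (by omega)
  have h₃ : ⌊dist x a⌋₊ + 1 ≤ level δ (startLevel δ x a + 1) := by
    simp only [level, startLevel]
    omega
  exact (Nat.lt_floor_add_one _).le.trans (by exact_mod_cast h₃)

lemma isProb_step {δ : ℕ}
    (hfin : ∀ (a : X) (r : ℝ), (Metric.closedBall a r).Finite)
    (hgeo : ∀ x y : X, ∀ k : ℕ, (k : ℝ) ≤ dist x y →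
      ∃ z : X, dist x z = k ∧ dist z y = dist x y - k)
    (hhyp : ∀ x₁ x₂ x₃ x₄ : X, dist x₁ x₄ + dist x₂ x₃ ≤
      max (dist x₁ x₂ + dist x₃ x₄) (dist x₁ x₃ + dist x₂ x₄) + (δ : ℝ))
    {x a : X} {i : ℕ} {ν : X →₀ ℝ} (hν : IsProb ν)
    (hsupp : ∀ y, ν y ≠ 0 → y ∈ tube x a (level δ (i + 1)) (2 * δ)) :
    IsProb (step δ a (level δ i) ν) ∧
      ∀ y, step δ a (level δ i) ν y ≠ 0 → y ∈ tube x a (level δ i) (2 * δ) := by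
  have hδ : (0 : ℝ) ≤ δ := Nat.cast_nonneg δ
  constructor
  · refine hν.linearCombination fun y hy => isProb_unif (tube_finite hfin _ _ _ _) ?_
    refine (nonempty_tube_zero hgeo ?_).mono (tube_mono hδ)
    rw [dist_comm, (hsupp y (mem_support_iff.1 hy)).1, level_succ]
    linarith
  · intro z hz
    obtain ⟨y, hy, hyz⟩ := exists_of_linearCombination_ne_zero hz
    refine mem_tube_trans hδ hhyp le_rfl (by rw [level_succ]; linarith) (hsupp y hy) ?_
    by_contra hmem
    exact hyz (unif_apply_of_notMem (tube_finite hfin _ _ _ _) hmem)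

/-- The end measure is the image under the descent of a probability measure living on any
intermediate level. -/
lemma exists_descent_eq_endMeasure {δ : ℕ}
    (hfin : ∀ (a : X) (r : ℝ), (Metric.closedBall a r).Finite)
    (hgeo : ∀ x y : X, ∀ k : ℕ, (k : ℝ) ≤ dist x y →
      ∃ z : X, dist x z = k ∧ dist z y = dist x y - k)
    (hhyp : ∀ x₁ x₂ x₃ x₄ : X, dist x₁ x₄ + dist x₂ x₃ ≤
      max (dist x₁ x₂ + dist x₃ x₄) (dist x₁ x₃ + dist x₂ x₄) + (δ : ℝ))
    {x a : X} (hxa : 4 * (δ : ℝ) ≤ dist x a) {i : ℕ} (hi : i ≤ startLevel δ x a) :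
    ∃ ν : X →₀ ℝ, IsProb ν ∧ (∀ y, ν y ≠ 0 → y ∈ tube x a (level δ i) (2 * δ)) ∧
      descent δ a i ν = endMeasure δ x a := by
  have hδ : (0 : ℝ) ≤ δ := Nat.cast_nonneg δ
  induction hi using Nat.decreasingInduction with
  | self =>
    refine ⟨_, isProb_unif (tube_finite hfin _ _ _ _)
      ((nonempty_tube_zero hgeo (level_startLevel_le hxa)).mono (tube_mono hδ)), ?_,
      (if_pos hxa).symm⟩
    intro y hy
    by_contra hmem
    exact hy (unif_apply_of_notMem (tube_finite hfin _ _ _ _)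
      fun h => hmem (tube_mono (by linarith) h))
  | of_succ i _ ih =>
    obtain ⟨ν, hν, hsupp, heq⟩ := ih
    obtain ⟨h₁, h₂⟩ := isProb_step hfin hgeo hhyp hν hsupp
    exact ⟨_, h₁, h₂, heq⟩

lemma isProb_endMeasure {δ : ℕ}
    (hfin : ∀ (a : X) (r : ℝ), (Metric.closedBall a r).Finite)
    (hgeo : ∀ x y : X, ∀ k : ℕ, (k : ℝ) ≤ dist x y →
      ∃ z : X, dist x z = k ∧ dist z y = dist x y - k)
    (hhyp : ∀ x₁ x₂ x₃ x₄ : X, dist x₁ x₄ + dist x₂ x₃ ≤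
      max (dist x₁ x₂ + dist x₃ x₄) (dist x₁ x₃ + dist x₂ x₄) + (δ : ℝ))
    (x a : X) : IsProb (endMeasure δ x a) := by
  by_cases hxa : 4 * (δ : ℝ) ≤ dist x a
  · obtain ⟨ν, hν, -, heq⟩ := exists_descent_eq_endMeasure hfin hgeo hhyp hxa (Nat.zero_le _)
    rw [← heq]
    exact hν
  · rw [endMeasure, if_neg hxa]
    refine ⟨fun y => ?_, mass_single _ _⟩
    classical
    rw [single_apply]
    split_ifs <;> norm_num

lemma mem_tube_of_endMeasure_ne_zero {δ : ℕ}
    (hfin : ∀ (a : X) (r : ℝ), (Metric.closedBall a r).Finite)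
    (hgeo : ∀ x y : X, ∀ k : ℕ, (k : ℝ) ≤ dist x y →
      ∃ z : X, dist x z = k ∧ dist z y = dist x y - k)
    (hhyp : ∀ x₁ x₂ x₃ x₄ : X, dist x₁ x₄ + dist x₂ x₃ ≤
      max (dist x₁ x₂ + dist x₃ x₄) (dist x₁ x₃ + dist x₂ x₄) + (δ : ℝ))
    {x a y : X} (hxa : 4 * (δ : ℝ) ≤ dist x a) (hy : endMeasure δ x a y ≠ 0) :
    y ∈ tube x a (4 * δ) (2 * δ) := by
  obtain ⟨ν, -, hsupp, heq⟩ := exists_descent_eq_endMeasure hfin hgeo hhyp hxa (Nat.zero_le _)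
  rw [← heq] at hy
  simpa [level] using hsupp y hy

lemma l1Norm_descent_le {δ V : ℕ}
    (hfin : ∀ (a : X) (r : ℝ), (Metric.closedBall a r).Finite)
    (hV : ∀ y : X, (Metric.closedBall y (4 * δ)).ncard ≤ V) (hV₁ : 1 ≤ V)
    (hgeo : ∀ x y : X, ∀ k : ℕ, (k : ℝ) ≤ dist x y →
      ∃ z : X, dist x z = k ∧ dist z y = dist x y - k)
    (hhyp : ∀ x₁ x₂ x₃ x₄ : X, dist x₁ x₄ + dist x₂ x₃ ≤
      max (dist x₁ x₂ + dist x₃ x₄) (dist x₁ x₃ + dist x₂ x₄) + (δ : ℝ))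
    {x a : X} {s : ℝ} (hs : 2 * δ ≤ s) (hs' : s ≤ 5 * δ) {j : ℕ} {σ : X →₀ ℝ}
    (hσ : mass σ = 0) (hsupp : ∀ y, σ y ≠ 0 → y ∈ tube x a (level δ j) s) :
    l1Norm (descent δ a j σ) ≤ (1 - (V : ℝ)⁻¹) ^ j * l1Norm σ := by
  have hδ : (0 : ℝ) ≤ δ := Nat.cast_nonneg δ
  have hq : 0 ≤ 1 - (V : ℝ)⁻¹ := sub_nonneg.2 (inv_le_one_of_one_le₀ (by exact_mod_cast hV₁))
  induction j generalizing σ with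
  | zero => simp [descent]
  | succ j ih =>
    by_cases h0 : σ = 0
    · simp [h0, l1Norm_zero]
    obtain ⟨y₀, hy₀⟩ := Finsupp.ne_iff.1 h0
    have hlevel := level_succ δ j
    obtain ⟨z₀, hz₀⟩ := exists_mem_forall_tube (l := level δ j) hgeo hhyp
      (by rw [hlevel]; linarith) (by rw [hlevel]; linarith) ⟨y₀, hsupp y₀ hy₀⟩
    have hprob : ∀ y ∈ σ.support, IsProb (unif (tube y a (level δ j) δ)) := fun y hy =>
      isProb_unif (tube_finite hfin _ _ _ _) ⟨z₀, hz₀ y (hsupp y (mem_support_iff.1 hy))⟩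
    have hmass : mass (step δ a (level δ j) σ) = 0 := by
      rw [step, mass_linearCombination fun y hy => (hprob y hy).2, hσ]
    have hnorm : l1Norm (step δ a (level δ j) σ) ≤ (1 - (V : ℝ)⁻¹) * l1Norm σ := by
      refine l1Norm_linearCombination_le_of_minorized (z₀ := z₀) hσ hprob fun y hy => ?_
      have hy' := hsupp y (mem_support_iff.1 hy)
      have hz := hz₀ y hy'
      have htube := tube_finite hfin y a (level δ j) δ
      rw [unif_apply_of_mem htube hz]
      refine inv_anti₀ (by exact_mod_cast (Set.ncard_pos htube).2 ⟨z₀, hz⟩) ?_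
      refine Nat.cast_le.2 ((Set.ncard_le_ncard (fun z hz => ?_) (hfin y (4 * δ))).trans (hV y))
      rw [Metric.mem_closedBall, dist_comm]
      have h₁ := hz.2
      rw [dist_comm y a, hy'.1, hlevel] at h₁
      linarith
    refine (ih hmass fun z hz => ?_).trans ?_
    · obtain ⟨y, hy, hyz⟩ := exists_of_linearCombination_ne_zero hz
      refine mem_tube_trans hδ hhyp hs (by rw [hlevel]; linarith) (hsupp y hy) ?_
      by_contra hmem
      exact hyz (unif_apply_of_notMem (tube_finite hfin _ _ _ _) hmem)
    · rw [pow_succ, mul_assoc]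
      exact mul_le_mul_of_nonneg_left hnorm (pow_nonneg hq j)

/-- The end measures seen from neighbouring points are exponentially close. -/
lemma exists_l1Norm_endMeasure_sub_le {δ V : ℕ} (hδ : 1 ≤ δ)
    (hfin : ∀ (a : X) (r : ℝ), (Metric.closedBall a r).Finite)
    (hV : ∀ y : X, (Metric.closedBall y (4 * δ)).ncard ≤ V) (hV₁ : 1 ≤ V)
    (hgeo : ∀ x y : X, ∀ k : ℕ, (k : ℝ) ≤ dist x y →
      ∃ z : X, dist x z = k ∧ dist z y = dist x y - k)
    (hhyp : ∀ x₁ x₂ x₃ x₄ : X, dist x₁ x₄ + dist x₂ x₃ ≤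
      max (dist x₁ x₂ + dist x₃ x₄) (dist x₁ x₃ + dist x₂ x₄) + (δ : ℝ))
    {x x' : X} (a : X) (hxx' : dist x x' = 1) :
    ∃ i : ℕ, dist x a ≤ 3 * δ * (i + 1) + 4 * δ + 1 ∧
      l1Norm (endMeasure δ x a - endMeasure δ x' a) ≤ 2 * (1 - (V : ℝ)⁻¹) ^ i := by
  have hδ' : (1 : ℝ) ≤ δ := by exact_mod_cast hδ
  have hq : 0 ≤ 1 - (V : ℝ)⁻¹ := sub_nonneg.2 (inv_le_one_of_one_le₀ (by exact_mod_cast hV₁))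
  have htri : dist x a ≤ 1 + dist x' a := hxx' ▸ dist_triangle x x' a
  have htri' : dist x' a ≤ 1 + dist x a := by
    rw [← hxx', dist_comm x x']
    exact dist_triangle x' x a
  have htwo : ∀ ν ν' : X →₀ ℝ, IsProb ν → IsProb ν' → l1Norm (ν - ν') ≤ 2 := fun ν ν' h h' =>
    (l1Norm_sub_le ν ν').trans (by rw [h.l1Norm_eq, h'.l1Norm_eq]; norm_num)
  by_cases hfar : 4 * (δ : ℝ) ≤ dist x a ∧ 4 * (δ : ℝ) ≤ dist x' a
  · obtain ⟨hx, hx'⟩ := hfar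
    set i := min (startLevel δ x a) (startLevel δ x' a) with hi
    refine ⟨i, ?_, ?_⟩
    · have h₁ := dist_le_level_startLevel hδ x a
      have h₂ := dist_le_level_startLevel hδ x' a
      simp only [level] at h₁ h₂
      push_cast at h₁ h₂
      rcases min_choice (startLevel δ x a) (startLevel δ x' a) with h | h <;>
        rw [hi, h] <;> linarith
    · obtain ⟨ν, hν, hsupp, heq⟩ :=
        exists_descent_eq_endMeasure hfin hgeo hhyp hx (min_le_left _ _ : i ≤ _)
      obtain ⟨ν', hν', hsupp', heq'⟩ :=
        exists_descent_eq_endMeasure hfin hgeo hhyp hx' (min_le_right _ _ : i ≤ _)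
      rw [← heq, ← heq', ← map_sub]
      refine (l1Norm_descent_le (x := x) (s := 2 * δ + 2) hfin hV hV₁ hgeo hhyp (by linarith)
        (by linarith) (by rw [map_sub, hν.2, hν'.2, sub_self]) fun y hy => ?_).trans ?_
      · by_cases hy₀ : ν y = 0
        · have hy₁ : ν' y ≠ 0 := fun h => hy (by simp [hy₀, h])
          obtain ⟨h₁, h₂⟩ := hsupp' y hy₁
          refine ⟨h₁, ?_⟩
          have := dist_triangle x x' y
          linarith
        · exact tube_mono (by linarith) (hsupp y hy₀)
      · rw [mul_comm]
        exact mul_le_mul_of_nonneg_right (htwo ν ν' hν hν') (pow_nonneg hq i)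
  · refine ⟨0, ?_, ?_⟩
    · have : dist x a ≤ 4 * δ + 1 := by
        by_contra! h
        exact hfar ⟨by linarith, by linarith⟩
      simp only [Nat.cast_zero]
      linarith
    · simpa using htwo _ _ (isProb_endMeasure hfin hgeo hhyp x a)
        (isProb_endMeasure hfin hgeo hhyp x' a)

lemma descent_mapDomain (δ : ℕ) (hfin : ∀ (a : X) (r : ℝ), (Metric.closedBall a r).Finite)
    {f : X → X} (hf : f.Bijective) (hd : ∀ x y, dist (f x) (f y) = dist x y)
    (a : X) (j : ℕ) (σ : X →₀ ℝ) :
    descent δ (f a) j (mapDomain f σ) = mapDomain f (descent δ a j σ) := by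
  induction j generalizing σ with
  | zero => rfl
  | succ j ih =>
    have hstep : step δ (f a) (level δ j) (mapDomain f σ) =
        mapDomain f (step δ a (level δ j) σ) := by
      rw [step, linearCombination_mapDomain, step, linearCombination_apply,
        linearCombination_apply, Finsupp.sum, Finsupp.sum, mapDomain_finsetSum]
      refine Finset.sum_congr rfl fun y _ => ?_
      rw [mapDomain_smul, mapDomain_unif hf.1 (tube_finite hfin _ _ _ _), image_tube hf.2 hd,
        Function.comp_apply]
    simp only [descent, LinearMap.comp_apply]
    rw [hstep, ih]

lemma endMeasure_map (δ : ℕ) (hfin : ∀ (a : X) (r : ℝ), (Metric.closedBall a r).Finite)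
    {f : X → X} (hf : f.Bijective) (hd : ∀ x y, dist (f x) (f y) = dist x y) (x a : X) :
    endMeasure δ (f x) (f a) = mapDomain f (endMeasure δ x a) := by
  unfold endMeasure startLevel
  rw [hd]
  split_ifs
  · rw [← descent_mapDomain δ hfin hf hd, mapDomain_unif hf.1 (tube_finite hfin _ _ _ _),
      image_tube hf.2 hd]
  · rw [mapDomain_single]

end Descent

section Separation

variable {X : Type*} [MetricSpace X]

/-- An estimate along edges integrates to an estimate along geodesics. -/
lemma l1Norm_sub_le_of_edges
    (hgeo : ∀ x y : X, ∀ k : ℕ, (k : ℝ) ≤ dist x y →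
      ∃ z : X, dist x z = k ∧ dist z y = dist x y - k)
    {m : X → X →₀ ℝ} {a : X} {C ε : ℝ} (hC : 0 ≤ C) (hε : 0 ≤ ε)
    (h : ∀ x x' : X, dist x x' = 1 → l1Norm (m x - m x') ≤ C * Real.exp (-ε * dist x a))
    {n : ℕ} {x x' : X} (hn : dist x x' = n) :
    l1Norm (m x - m x') ≤ n * (C * Real.exp (-ε * (dist x a - n))) := by
  induction n generalizing x' with
  | zero =>
    obtain rfl : x = x' := by simpa using hn
    simp [l1Norm_zero]
  | succ n ih =>
    push_cast at hn ⊢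
    obtain ⟨z, hz, hz'⟩ := hgeo x x' n (by linarith)
    have h₁ := ih hz
    have h₂ := h z x' (by linarith)
    have h₃ := l1Norm_add_le (m x - m z) (m z - m x')
    rw [sub_add_sub_cancel] at h₃
    have h₄ : C * Real.exp (-ε * (dist x a - n)) ≤ C * Real.exp (-ε * (dist x a - (n + 1))) := by
      gcongr C * Real.exp ?_
      nlinarith
    have h₅ : C * Real.exp (-ε * dist z a) ≤ C * Real.exp (-ε * (dist x a - (n + 1))) := by
      gcongr C * Real.exp ?_
      have := dist_triangle x z a
      nlinarith
    have h₆ := mul_le_mul_of_nonneg_left h₄ (Nat.cast_nonneg (α := ℝ) n)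
    linarith

lemma finite_disjoint
    (hfin : ∀ (a : X) (r : ℝ), (Metric.closedBall a r).Finite)
    (hnat : ∀ x y : X, ∃ n : ℕ, dist x y = n)
    (hgeo : ∀ x y : X, ∀ k : ℕ, (k : ℝ) ≤ dist x y →
      ∃ z : X, dist x z = k ∧ dist z y = dist x y - k)
    {m : X → X → X →₀ ℝ} (hm : ∀ x a, IsProb (m x a)) {C ε : ℝ} (hC : 0 ≤ C) (hε : 0 < ε)
    (h : ∀ x x' a : X, dist x x' = 1 →
      l1Norm (m x a - m x' a) ≤ C * Real.exp (-ε * dist x a)) (x x' : X) :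
    {a : X | ∀ y, m x a y = 0 ∨ m x' a y = 0}.Finite := by
  obtain ⟨n, hn⟩ := hnat x x'
  refine (hfin x (n + n * C / ε)).subset fun a ha => ?_
  have h₁ := l1Norm_sub_le_of_edges (m := fun x => m x a) hgeo hC hε.le (fun x x' => h x x' a) hn
  rw [l1Norm_sub_of_disjoint (hm x a) (hm x' a) ha] at h₁
  rw [Metric.mem_closedBall, dist_comm]
  have h₂ := Real.add_one_le_exp (ε * (dist x a - n))
  have h₃ : Real.exp (ε * (dist x a - n)) ≤ n * C := by
    rw [neg_mul, Real.exp_neg, ← mul_assoc, ← div_eq_mul_inv,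
      le_div_iff₀ (Real.exp_pos _)] at h₁
    linarith [Real.exp_pos (ε * (dist x a - n))]
  have h₄ : dist x a - n ≤ n * C / ε := by
    rw [le_div_iff₀ hε]
    linarith
  linarith

lemma le_ncard_disjoint {δ : ℕ} (hδ : 1 ≤ δ)
    (hnat : ∀ x y : X, ∃ n : ℕ, dist x y = n)
    (hgeo : ∀ x y : X, ∀ k : ℕ, (k : ℝ) ≤ dist x y →
      ∃ z : X, dist x z = k ∧ dist z y = dist x y - k)
    {m : X → X → X →₀ ℝ}
    (hm : ∀ x a y : X, 4 * (δ : ℝ) ≤ dist x a → m x a y ≠ 0 → y ∈ tube x a (4 * δ) (2 * δ))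
    {x x' : X} (hfin : {a : X | ∀ y, m x a y = 0 ∨ m x' a y = 0}.Finite)
    (hxx' : 16 * (δ : ℝ) ≤ dist x x') :
    1 / 2 * dist x x' ≤ {a : X | ∀ y, m x a y = 0 ∨ m x' a y = 0}.ncard := by
  obtain ⟨n, hn⟩ := hnat x x'
  have hδ' : (1 : ℝ) ≤ δ := by exact_mod_cast hδ
  have hn' : 16 * δ ≤ n := by
    rw [hn] at hxx'
    exact_mod_cast hxx'
  have hz : ∀ k : ℕ, ∃ z, k ≤ n → dist x z = k ∧ dist z x' = n - k := fun k => by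
    by_cases hk : k ≤ n
    · obtain ⟨z, hz⟩ := hgeo x x' k (by rw [hn]; exact_mod_cast hk)
      exact ⟨z, fun _ => by rwa [hn] at hz⟩
    · exact ⟨x, fun h => absurd h hk⟩
  choose z hz using hz
  have hcard : (Finset.Icc (4 * δ) (n - 4 * δ) : Set ℕ).ncard ≤
      {a : X | ∀ y, m x a y = 0 ∨ m x' a y = 0}.ncard := by
    refine Set.ncard_le_ncard_of_injOn z (fun k hk => ?_) (fun k hk l hl hkl => ?_) hfin
    · obtain ⟨hk₁, hk₂⟩ := Finset.mem_Icc.1 (Finset.mem_coe.1 hk)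
      obtain ⟨h₁, h₂⟩ := hz k (by omega)
      have hk₂' : (k : ℝ) + 4 * δ ≤ n := by exact_mod_cast (by omega : k + 4 * δ ≤ n)
      have hk₁' : 4 * (δ : ℝ) ≤ k := by exact_mod_cast hk₁
      intro y
      by_contra! hy
      obtain ⟨-, hy₁⟩ := hm x (z k) y (by linarith) hy.1
      obtain ⟨-, hy₂⟩ := hm x' (z k) y (by rw [dist_comm]; linarith) hy.2
      have := dist_triangle x y x'
      rw [dist_comm x' y, dist_comm x' (z k)] at hy₂
      linarith
    · have hk' := (Finset.mem_Icc.1 (Finset.mem_coe.1 hk)).2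
      have hl' := (Finset.mem_Icc.1 (Finset.mem_coe.1 hl)).2
      have h₁ := (hz k (by omega)).1
      rw [hkl, (hz l (by omega)).1] at h₁
      exact_mod_cast h₁.symm
  rw [Set.ncard_coe_finset, Nat.card_Icc] at hcard
  have h₁ : n ≤ 2 * {a : X | ∀ y, m x a y = 0 ∨ m x' a y = 0}.ncard := by omega
  have h₂ : (n : ℝ) ≤ 2 * ({a : X | ∀ y, m x a y = 0 ∨ m x' a y = 0}.ncard : ℝ) := by
    exact_mod_cast h₁
  rw [hn]
  linarith

end Separation

end DiscreteHyperbolic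

open DiscreteHyperbolic in
/-- Theorem 4.1 of Alvarez–Lafforgue. Given a good discrete hyperbolic space `(X, d)`
(`δ`-hyperbolic for an integer `δ ≥ 1`, with `ℕ`-valued geodesic metric, uniformly
locally finite) equipped with an isometric action of a group `G`, there is a
`G`-equivariant family of finitely supported probability measures `μ x a` on `X`
satisfying the support, exponential-decay and disjointness properties (i), (ii), (iii). -/
theorem exists_equivariant_measures_good_discrete_hyperbolic
    {X : Type*} [MetricSpace X] {G : Type*} [Group G] [MulAction G X]
    (δ : ℤ) (hδ : 1 ≤ δ)
    (hnat : ∀ x y : X, ∃ n : ℕ, dist x y = n)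
    (hgeo : ∀ x y : X, ∀ k : ℕ, (k : ℝ) ≤ dist x y →
      ∃ z : X, dist x z = k ∧ dist z y = dist x y - k)
    (hulf : ∀ r : ℝ, ∃ K : ℕ, ∀ x : X,
      (Metric.closedBall x r).Finite ∧ Nat.card (Metric.closedBall x r) ≤ K)
    (hhyp : ∀ x₁ x₂ x₃ x₄ : X, dist x₁ x₄ + dist x₂ x₃ ≤
      max (dist x₁ x₂ + dist x₃ x₄) (dist x₁ x₃ + dist x₂ x₄) + (δ : ℝ))
    (hiso : ∀ (g : G) (x y : X), dist (g • x) (g • y) = dist x y) :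
    ∃ μ : X → X → X → ℝ,
      -- each `μ x a` is a finitely supported probability measure on `X`
      (∀ x a y, 0 ≤ μ x a y) ∧
      (∀ x a, (Function.support (μ x a)).Finite) ∧
      (∀ x a, ∑ᶠ y, μ x a y = 1) ∧
      -- `G`-equivariance
      (∀ (g : G) (x a y : X), μ (g • x) (g • a) (g • y) = μ x a y) ∧
      -- (i) support contained in `B(a, 4δ) ∩ 2δ-geod(x, a)`,
      --     and in `S(a, 4δ) ∩ 2δ-geod(x, a)` when `d(x, a) ≥ 4δ`
      (∀ x a y, μ x a y ≠ 0 →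
        dist a y ≤ 4 * (δ : ℝ) ∧ dist x y + dist y a ≤ dist x a + 2 * (δ : ℝ)) ∧
      (∀ x a y, 4 * (δ : ℝ) ≤ dist x a → μ x a y ≠ 0 → dist a y = 4 * (δ : ℝ)) ∧
      -- (ii) exponential decay of `‖μ x a - μ x' a‖₁` for neighbors `x, x'`
      (∃ ε : ℝ, 0 < ε ∧ ∃ C : ℝ, 0 < C ∧ ∀ x x' a : X, dist x x' = 1 →
        ∑ᶠ y, |μ x a y - μ x' a y| ≤ C * Real.exp (-ε * dist x a)) ∧
      -- (iii) many points `a` with disjoint supports when `d(x,x')` is large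
      (∃ η : ℝ, 0 < η ∧ ∃ N : ℕ, ∀ x x' : X, (N : ℝ) ≤ dist x x' →
        {a : X | ∀ y, μ x a y = 0 ∨ μ x' a y = 0}.Finite ∧
        η * dist x x' ≤ (Nat.card {a : X | ∀ y, μ x a y = 0 ∨ μ x' a y = 0} : ℝ)) := by
  lift δ to ℕ using by omega
  rw [Int.cast_natCast] at *
  replace hδ : 1 ≤ δ := by exact_mod_cast hδ
  have hfin : ∀ (a : X) (r : ℝ), (Metric.closedBall a r).Finite := fun a r =>
    ((hulf r).choose_spec a).1
  obtain ⟨K, hK⟩ := hulf (4 * δ)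
  have hV : ∀ y : X, (Metric.closedBall y (4 * δ)).ncard ≤ K + 2 := fun y =>
    ((Nat.card_coe_set_eq _).symm.trans_le (hK y).2).trans (by omega)
  have hprob := isProb_endMeasure hfin hgeo hhyp
  have hdecay : ∃ ε : ℝ, 0 < ε ∧ ∃ C : ℝ, 0 < C ∧ ∀ x x' a : X, dist x x' = 1 →
      l1Norm (endMeasure δ x a - endMeasure δ x' a) ≤ C * Real.exp (-ε * dist x a) := by
    have hV₁ : (0 : ℝ) < ((K + 2 : ℕ) : ℝ)⁻¹ := by positivity
    have hV₂ : ((K + 2 : ℕ) : ℝ)⁻¹ < 1 :=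
      inv_lt_one_of_one_lt₀ (by exact_mod_cast (by omega : 1 < K + 2))
    have hδ' : (0 : ℝ) < 3 * δ := by positivity
    set r : ℝ := -Real.log (1 - ((K + 2 : ℕ) : ℝ)⁻¹) with hr
    have hr₀ : 0 < r := neg_pos.2 (Real.log_neg (by linarith) (by linarith))
    refine ⟨r / (3 * δ), by positivity, 2 * Real.exp (r + r / (3 * δ) * (4 * δ + 1)),
      by positivity, fun x x' a hxx' => ?_⟩
    obtain ⟨i, hi, hle⟩ :=
      exists_l1Norm_endMeasure_sub_le hδ hfin hV (by omega) hgeo hhyp a hxx'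
    refine hle.trans ?_
    have hexp : 1 - ((K + 2 : ℕ) : ℝ)⁻¹ = Real.exp (-r) := by
      rw [hr, neg_neg, Real.exp_log (by linarith)]
    rw [hexp, ← Real.exp_nat_mul, mul_assoc, ← Real.exp_add]
    gcongr 2 * Real.exp ?_
    have h₁ := mul_le_mul_of_nonneg_left hi (div_pos hr₀ hδ').le
    have h₂ : r / (3 * δ) * (3 * δ * (i + 1) + 4 * δ + 1) =
        r * (i + 1) + r / (3 * δ) * (4 * δ + 1) := by
      field_simp
      ring
    rw [h₂] at h₁
    linarith
  refine ⟨fun x a y => endMeasure δ x a y, fun x a y => (hprob x a).1 y,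
    fun x a => (endMeasure δ x a).hasFiniteSupport,
    fun x a => (mass_eq_finsum _).symm.trans (hprob x a).2, fun g x a y => ?_,
    fun x a y hy => ?_,
    fun x a y hxa hy => (mem_tube_of_endMeasure_ne_zero hfin hgeo hhyp hxa hy).1, hdecay, ?_⟩
  · have hg : Function.Bijective fun x : X => g • x := MulAction.bijective g
    have := endMeasure_map δ hfin hg (hiso g) x a
    exact (DFunLike.congr_fun this (g • y)).trans (Finsupp.mapDomain_apply hg.1 _ y)
  · by_cases hxa : 4 * (δ : ℝ) ≤ dist x a
    · obtain ⟨h₁, h₂⟩ := mem_tube_of_endMeasure_ne_zero hfin hgeo hhyp hxa hy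
      exact ⟨h₁.le, by rw [dist_comm y a]; linarith⟩
    · have heq : endMeasure δ x a = Finsupp.single x 1 := if_neg hxa
      simp only [heq] at hy
      obtain rfl : x = y := by
        by_contra h
        exact hy (Finsupp.single_eq_of_ne (Ne.symm h))
      exact ⟨by rw [dist_comm]; linarith, by rw [dist_self]; linarith [Nat.cast_nonneg (α := ℝ) δ]⟩
  · obtain ⟨ε, hε, C, hC, h⟩ := hdecay
    refine ⟨1 / 2, by norm_num, 16 * δ, fun x x' hxx' => ?_⟩
    have hS := finite_disjoint hfin hnat hgeo hprob hC.le hε h x x'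
    refine ⟨hS, ?_⟩
    rw [Nat.card_coe_set_eq]
    exact le_ncard_disjoint hδ hnat hgeo
      (fun x a y => mem_tube_of_endMeasure_ne_zero hfin hgeo hhyp) hS (by exact_mod_cast hxx')
end

section
/- (Yu's theorem.) Let Γ be a group with a finite generating set S, let d be the associated word metric (d(g,h) is the least n ∈ ℕ such that g⁻¹h is a product of n elements of S ∪ S⁻¹), and assume (Γ,d) is δ-hyperbolic for some real δ ≥ 0, i.e., Γ is a hyperbolic group. Then there exist a real p₀ ≥ 1 and m ∈ ℕ such that for every real p ≥ p₀ there exists a map b : Γ → ℓ^p(Γ × Fin m) which is a cocycle for the representation π given by (π(g)f)(x,i) = f(g⁻¹x, i) (i.e., b(gh) = b(g) + π(g)(b(h)) for all g,h ∈ Γ) and which is proper (for every M ≥ 0 the set {g ∈ Γ : ‖b(g)‖_p ≤ M} is finite). In particular Γ admits a proper affine isometric action on ℓ^p of a finite disjoint union of copies of Γ for all sufficiently large p. -/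
/-- The average of a real function over a finite set. -/
noncomputable def finsetAverage {X : Type*} (s : Finset X) (f : X → ℝ) : ℝ :=
  (∑ y ∈ s, f y) / s.card

section Average

variable {X : Type*} {s t : Finset X} {f : X → ℝ}

lemma finsetAverage_congr {g : X → ℝ} (h : ∀ y ∈ s, f y = g y) :
    finsetAverage s f = finsetAverage s g := by
  rw [finsetAverage, finsetAverage, Finset.sum_congr rfl h]

lemma finsetAverage_mem_Icc (hs : s.Nonempty) (h : ∀ y ∈ s, f y ∈ Set.Icc (0 : ℝ) 1) :
    finsetAverage s f ∈ Set.Icc (0 : ℝ) 1 := by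
  have hc : (0 : ℝ) < s.card := by exact_mod_cast hs.card_pos
  refine ⟨div_nonneg (Finset.sum_nonneg fun y hy => (h y hy).1) hc.le, ?_⟩
  rw [finsetAverage, div_le_one hc]
  simpa using Finset.sum_le_card_nsmul s f 1 fun y hy => (h y hy).2

lemma exists_ne_zero_of_finsetAverage_ne_zero (h : finsetAverage s f ≠ 0) :
    ∃ y ∈ s, f y ≠ 0 := by
  by_contra! h0
  exact h (by simp [finsetAverage, Finset.sum_eq_zero h0])

lemma finsetAverage_sub (hs : s.Nonempty) (ht : t.Nonempty) :
    finsetAverage s f - finsetAverage t f =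
      (∑ x ∈ s ×ˢ t, (f x.1 - f x.2)) / (s.card * t.card) := by
  have hc : (s.card : ℝ) ≠ 0 := by exact_mod_cast hs.card_pos.ne'
  have hc' : (t.card : ℝ) ≠ 0 := by exact_mod_cast ht.card_pos.ne'
  simp only [finsetAverage, Finset.sum_product, Finset.sum_sub_distrib, Finset.sum_const,
    nsmul_eq_mul, ← Finset.mul_sum]
  field_simp

lemma abs_finsetAverage_sub_le {M : ℝ} (hs : s.Nonempty) (ht : t.Nonempty)
    (h : ∀ x ∈ s, ∀ y ∈ t, |f x - f y| ≤ M) :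
    |finsetAverage s f - finsetAverage t f| ≤ M := by
  have hc : (0 : ℝ) < s.card := by exact_mod_cast hs.card_pos
  have hc' : (0 : ℝ) < t.card := by exact_mod_cast ht.card_pos
  rw [finsetAverage_sub hs ht, abs_div, abs_of_pos (mul_pos hc hc'), div_le_iff₀ (mul_pos hc hc')]
  refine (Finset.abs_sum_le_sum_abs _ _).trans ?_
  refine (Finset.sum_le_card_nsmul _ _ M fun x hx => ?_).trans_eq ?_
  · rw [Finset.mem_product] at hx
    exact h _ hx.1 _ hx.2
  · rw [Finset.card_product, nsmul_eq_mul]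
    push_cast
    ring

/-- Averages over two sets with a common point are strictly closer than the oscillation. -/
lemma abs_finsetAverage_sub_le_of_mem {M V : ℝ} {z : X} (hs : z ∈ s) (ht : z ∈ t)
    (hsV : (s.card : ℝ) ≤ V) (htV : (t.card : ℝ) ≤ V)
    (h : ∀ x ∈ s, ∀ y ∈ t, |f x - f y| ≤ M) :
    |finsetAverage s f - finsetAverage t f| ≤ (1 - 1 / (V ^ 2 + 2)) * M := by
  classical
  have hM : 0 ≤ M := (abs_nonneg _).trans (h z hs z ht)
  have hc : (0 : ℝ) < s.card := by exact_mod_cast Finset.card_pos.2 ⟨z, hs⟩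
  have hc' : (0 : ℝ) < t.card := by exact_mod_cast Finset.card_pos.2 ⟨z, ht⟩
  have hst : (0 : ℝ) < s.card * t.card := mul_pos hc hc'
  rw [finsetAverage_sub ⟨z, hs⟩ ⟨z, ht⟩, abs_div, abs_of_pos hst, div_le_iff₀ hst]
  have hz : (z, z) ∈ s ×ˢ t := Finset.mem_product.2 ⟨hs, ht⟩
  have hsum : |∑ x ∈ s ×ˢ t, (f x.1 - f x.2)| ≤ (s.card * t.card - 1) * M := by
    rw [← Finset.add_sum_erase _ _ hz]
    simp only [sub_self, zero_add]
    refine (Finset.abs_sum_le_sum_abs _ _).trans ?_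
    refine (Finset.sum_le_card_nsmul _ _ M fun x hx => ?_).trans_eq ?_
    · have hx := Finset.mem_product.1 (Finset.mem_of_mem_erase hx)
      exact h _ hx.1 _ hx.2
    · rw [Finset.card_erase_of_mem hz, Finset.card_product, nsmul_eq_mul,
        Nat.cast_sub (Nat.mul_pos (Finset.card_pos.2 ⟨z, hs⟩) (Finset.card_pos.2 ⟨z, ht⟩))]
      push_cast
      ring
  have hV : (s.card : ℝ) * t.card ≤ V ^ 2 + 2 := by nlinarith
  have hd : (s.card : ℝ) * t.card / (V ^ 2 + 2) ≤ 1 := (div_le_one (by positivity)).2 hV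
  calc |∑ x ∈ s ×ˢ t, (f x.1 - f x.2)| ≤ (s.card * t.card - 1) * M := hsum
    _ ≤ (s.card * t.card - s.card * t.card / (V ^ 2 + 2)) * M := by gcongr
    _ = (1 - 1 / (V ^ 2 + 2)) * M * (s.card * t.card) := by ring

end Average

/-- A locally finite hyperbolic space with integral geodesic metric and at most exponential
growth. -/
structure HyperbolicGraph (X : Type*) where
  /-- the distance -/
  dist : X → X → ℕ
  /-- the hyperbolicity constant -/
  δ : ℕ
  /-- the growth rate of balls -/
  growth : ℕ
  /-- the closed balls -/
  ball : X → ℕ → Finset X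
  dist_self : ∀ x, dist x x = 0
  dist_comm : ∀ x y, dist x y = dist y x
  dist_triangle : ∀ x y z, dist x z ≤ dist x y + dist y z
  exists_between : ∀ x y n, n ≤ dist x y → ∃ z, dist x z = n ∧ dist z y = dist x y - n
  hyperbolic : ∀ x y z w,
    dist x w + dist y z ≤ max (dist x y + dist z w) (dist x z + dist y w) + δ
  mem_ball : ∀ x y n, y ∈ ball x n ↔ dist x y ≤ n
  card_ball_le : ∀ x n, (ball x n).card ≤ growth ^ n

namespace HyperbolicGraph

variable {X : Type*} (G : HyperbolicGraph X)

/-- Points at distance `n` from `a` lying almost on a geodesic from `x` to `a`. -/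
def steps (a : X) (n : ℕ) (x : X) : Finset X :=
  (G.ball x (G.dist x a + G.δ)).filter
    fun y => G.dist y a = n ∧ G.dist x y + n ≤ G.dist x a + G.δ

/-- The distance between consecutive spheres. -/
def radius : ℕ := 3 * G.δ + 1

open Classical in
/-- The probability that the random walk towards `a` through the spheres of radius
`G.radius * k, …, G.radius`, started at `x`, ends at `z`. -/
noncomputable def kernel (a z : X) : ℕ → X → ℝ
  | 0, x => if x = z then 1 else 0
  | k + 1, x => if G.dist x a ≤ G.radius * (k + 1) then kernel a z k x
      else finsetAverage (G.steps a (G.radius * (k + 1)) x) (kernel a z k)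

/-- The probability that the random walk from `x` towards `a` hits the ball of radius `G.radius`
around `a` at `z`. -/
noncomputable def hitting (a z x : X) : ℝ := G.kernel a z (G.dist x a) x

variable {G} {a x x' y y' z w : X} {k n : ℕ}

lemma mem_steps : y ∈ G.steps a n x ↔ G.dist y a = n ∧ G.dist x y + n ≤ G.dist x a + G.δ := by
  rw [steps, Finset.mem_filter, mem_ball]
  omega

lemma radius_pos : 0 < G.radius := Nat.succ_pos _

lemma le_radius_mul (n : ℕ) : n ≤ G.radius * (n + 1) := by
  nlinarith [G.radius_pos]

lemma kernel_add (j : ℕ) (h : G.dist x a ≤ G.radius * (k + 1)) :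
    G.kernel a z (k + j) x = G.kernel a z k x := by
  induction j with
  | zero => rfl
  | succ j ih =>
    rw [← add_assoc, kernel, if_pos (h.trans (Nat.mul_le_mul_left _ (by omega))), ih]

lemma hitting_eq_kernel (h : G.dist x a ≤ G.radius * (k + 1)) :
    G.hitting a z x = G.kernel a z k x := by
  rw [hitting, ← kernel_add k (le_radius_mul _), add_comm, kernel_add _ h]

open Classical in
lemma hitting_of_le (h : G.dist x a ≤ G.radius) :
    G.hitting a z x = if x = z then 1 else 0 := by
  rw [hitting_eq_kernel (k := 0) (by simpa using h), kernel]

lemma hitting_of_lt (h : G.radius * (k + 1) < G.dist x a)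
    (h' : G.dist x a ≤ G.radius * (k + 1 + 1)) :
    G.hitting a z x =
      finsetAverage (G.steps a (G.radius * (k + 1)) x) (G.hitting a z) := by
  rw [hitting_eq_kernel h', kernel, if_neg (not_le.2 h)]
  exact finsetAverage_congr fun y hy => (hitting_eq_kernel (mem_steps.1 hy).1.le).symm

lemma exists_dist_target (h : n ≤ G.dist x a) :
    ∃ y, G.dist y a = n ∧ G.dist x y + n = G.dist x a := by
  obtain ⟨y, hy, hy'⟩ := G.exists_between x a (G.dist x a - n) (by omega)
  exact ⟨y, by omega, by omega⟩

lemma steps_nonempty (h : n ≤ G.dist x a) : (G.steps a n x).Nonempty := by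
  obtain ⟨y, hy, hy'⟩ := exists_dist_target h
  exact ⟨y, mem_steps.2 ⟨hy, by omega⟩⟩

/-- Induction over the spheres around `a`. -/
lemma step_induction {P : X → Prop} (a : X) (base : ∀ x, G.dist x a ≤ G.radius → P x)
    (step : ∀ k x, G.radius * (k + 1) < G.dist x a → G.dist x a ≤ G.radius * (k + 1 + 1) →
      (∀ y ∈ G.steps a (G.radius * (k + 1)) x, P y) → P x) (x : X) : P x := by
  have key : ∀ k x, G.dist x a ≤ G.radius * (k + 1) → P x := by
    intro k
    induction k with
    | zero => exact fun x hx => base x (by simpa using hx)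
    | succ k ih =>
      intro x hx
      by_cases hx' : G.dist x a ≤ G.radius * (k + 1)
      · exact ih x hx'
      · exact step k x (not_le.1 hx') hx fun y hy => ih y (mem_steps.1 hy).1.le
  exact key _ x (le_radius_mul _)

lemma hitting_mem_Icc (a z x : X) : G.hitting a z x ∈ Set.Icc (0 : ℝ) 1 := by
  refine step_induction (G := G) (P := fun x => G.hitting a z x ∈ Set.Icc (0 : ℝ) 1) a ?_ ?_ x
  · intro x hx
    rw [hitting_of_le hx]
    split_ifs <;> simp
  · intro k x hx hx' ih
    rw [hitting_of_lt hx hx']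
    exact finsetAverage_mem_Icc (steps_nonempty hx.le) ih

lemma abs_hitting_sub_le_one (a z x y : X) : |G.hitting a z x - G.hitting a z y| ≤ 1 := by
  have hx := hitting_mem_Icc (G := G) a z x
  have hy := hitting_mem_Icc (G := G) a z y
  rw [abs_le]
  constructor <;> linarith [hx.1, hx.2, hy.1, hy.2]

lemma sum_hitting (a x : X) : ∑ z ∈ G.ball a G.radius, G.hitting a z x = 1 := by
  classical
  refine step_induction (G := G) (P := fun x => ∑ z ∈ G.ball a G.radius, G.hitting a z x = 1) a ?_ ?_ x
  · intro x hx
    simp only [hitting_of_le hx, Finset.sum_ite_eq]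
    rw [if_pos ((G.mem_ball _ _ _).2 (by rwa [G.dist_comm]))]
  · intro k x hx hx' ih
    have hc : ((G.steps a (G.radius * (k + 1)) x).card : ℝ) ≠ 0 := by
      exact_mod_cast (steps_nonempty hx.le).card_pos.ne'
    simp only [hitting_of_lt hx hx', finsetAverage]
    rw [← Finset.sum_div, Finset.sum_comm, Finset.sum_congr rfl ih]
    simp [hc]

lemma dist_le_of_mem_steps (hx : 2 * n + G.dist x x' ≤ G.dist x a + G.dist x' a)
    (hy : y ∈ G.steps a n x) (hy' : y' ∈ G.steps a n x') : G.dist y y' ≤ 3 * G.δ := by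
  obtain ⟨hy1, hy2⟩ := mem_steps.1 hy
  obtain ⟨hy1', hy2'⟩ := mem_steps.1 hy'
  have h1 := G.hyperbolic y a x x'
  have h2 := G.hyperbolic y a x' y'
  have c0 := G.dist_comm x y
  have c1 := G.dist_comm a x
  have c2 := G.dist_comm a x'
  have c3 := G.dist_comm a y'
  omega

/-- The contraction factor of one step of the random walk. -/
noncomputable def contraction (G : HyperbolicGraph X) : ℝ :=
  1 - 1 / (((G.growth : ℝ) ^ (G.radius + G.δ)) ^ 2 + 2)

lemma card_steps_le (h : G.dist x a = n + G.radius) :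
    ((G.steps a n x).card : ℝ) ≤ (G.growth : ℝ) ^ (G.radius + G.δ) := by
  have hsub : G.steps a n x ⊆ G.ball x (G.radius + G.δ) := by
    intro y hy
    have := (mem_steps.1 hy).2
    rw [mem_ball]
    omega
  exact_mod_cast (Finset.card_le_card hsub).trans (G.card_ball_le _ _)

lemma exists_mem_steps_inter (hy : G.dist y a = n + G.radius) (hy' : G.dist y' a = n + G.radius)
    (h : G.dist y y' ≤ 3 * G.δ) : ∃ w, w ∈ G.steps a n y ∧ w ∈ G.steps a n y' := by
  obtain ⟨w, hw, hw'⟩ := exists_dist_target (G := G) (n := n) (x := y) (a := a) (by omega)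
  refine ⟨w, mem_steps.2 ⟨hw, by omega⟩, mem_steps.2 ⟨hw, ?_⟩⟩
  have h1 := G.hyperbolic w a y y'
  have c1 := G.dist_comm a y
  have c2 := G.dist_comm a y'
  have c3 := G.dist_comm w y
  have c4 := G.dist_comm w y'
  simp only [radius] at *
  omega

lemma contraction_pos : 0 < G.contraction := by
  rw [contraction, sub_pos, div_lt_one (by positivity)]
  nlinarith [sq_nonneg ((G.growth : ℝ) ^ (G.radius + G.δ))]

lemma contraction_lt_one : G.contraction < 1 := by
  rw [contraction, sub_lt_self_iff]
  positivity

lemma abs_hitting_sub_le_of_sphere (z : X) (k : ℕ) :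
    ∀ y y', G.dist y a = G.radius * (k + 1) → G.dist y' a = G.radius * (k + 1) →
      G.dist y y' ≤ 3 * G.δ → |G.hitting a z y - G.hitting a z y'| ≤ G.contraction ^ k := by
  induction k with
  | zero => exact fun y y' _ _ _ => by simpa using abs_hitting_sub_le_one a z y y'
  | succ k ih =>
    intro y y' hy hy' h
    have hr : G.radius * (k + 1 + 1) = G.radius * (k + 1) + G.radius := by ring
    have hpos := G.radius_pos
    rw [hitting_of_lt (by omega) hy.le, hitting_of_lt (by omega) hy'.le, pow_succ']
    obtain ⟨w, hw, hw'⟩ := exists_mem_steps_inter (hy.trans hr) (hy'.trans hr) h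
    refine abs_finsetAverage_sub_le_of_mem hw hw' (card_steps_le (hy.trans hr))
      (card_steps_le (hy'.trans hr)) fun u hu u' hu' => ?_
    refine ih u u' (mem_steps.1 hu).1 (mem_steps.1 hu').1 (dist_le_of_mem_steps ?_ hu hu')
    have : G.radius = 3 * G.δ + 1 := rfl
    omega

lemma abs_hitting_sub_le_of_adjacent (z : X) (hd : G.dist x x' ≤ 1)
    (hx : G.radius * (k + 1) < G.dist x a) (hx' : G.dist x a ≤ G.radius * (k + 1 + 1))
    (hle : G.dist x' a ≤ G.dist x a) :
    |G.hitting a z x - G.hitting a z x'| ≤ G.contraction ^ k := by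
  have htri := G.dist_triangle x x' a
  rw [hitting_of_lt hx hx']
  rcases (show G.radius * (k + 1) ≤ G.dist x' a by omega).eq_or_lt with h | h
  · have hx'1 : finsetAverage {x'} (G.hitting a z) = G.hitting a z x' := by simp [finsetAverage]
    rw [← hx'1]
    refine abs_finsetAverage_sub_le (steps_nonempty hx.le) (Finset.singleton_nonempty x')
      fun u hu u' hu' => ?_
    rw [Finset.mem_singleton] at hu'
    subst hu'
    refine abs_hitting_sub_le_of_sphere z k u u' (mem_steps.1 hu).1 h.symm
      (dist_le_of_mem_steps (x := x) (x' := u') (n := G.radius * (k + 1)) (by omega) hu ?_)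
    exact mem_steps.2 ⟨h.symm, by rw [G.dist_self]; omega⟩
  · rw [hitting_of_lt h (hle.trans hx')]
    refine abs_finsetAverage_sub_le (steps_nonempty hx.le) (steps_nonempty h.le)
      fun u hu u' hu' => ?_
    exact abs_hitting_sub_le_of_sphere z k u u' (mem_steps.1 hu).1 (mem_steps.1 hu').1
      (dist_le_of_mem_steps (by omega) hu hu')

/-- A walk started near a geodesic to `a` hits the last sphere near that geodesic. -/
lemma dist_le_of_hitting_ne_zero_of_sphere (hw : G.dist w a = G.radius) (k : ℕ) :
    ∀ y y', G.dist y a = G.radius * (k + 1) → G.dist y' a = G.radius * (k + 1) →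
      G.dist y y' ≤ 3 * G.δ → G.dist y' w = G.radius * k →
      G.hitting a z y ≠ 0 → G.dist z w ≤ 3 * G.δ := by
  induction k with
  | zero =>
    intro y y' hy hy' h hw' hz
    rw [hitting_of_le (by simp [hy])] at hz
    have hyz : y = z := by
      by_contra hne
      exact hz (if_neg hne)
    have := G.dist_triangle y y' w
    rw [← hyz]
    omega
  | succ k ih =>
    intro y y' hy hy' h hw' hz
    have hr : G.radius * (k + 1 + 1) = G.radius * (k + 1) + G.radius := by ring
    have hr' : G.radius * (k + 1) = G.radius * k + G.radius := by ring
    have hpos := G.radius_pos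
    rw [hitting_of_lt (by omega) hy.le] at hz
    obtain ⟨u, hu, huz⟩ := exists_ne_zero_of_finsetAverage_ne_zero hz
    obtain ⟨u', hu1, hu2⟩ := G.exists_between y' w G.radius (by omega)
    have t1 := G.dist_triangle u' w a
    have t2 := G.dist_triangle y' u' a
    have hu' : G.dist u' a = G.radius * (k + 1) := by omega
    refine ih u u' (mem_steps.1 hu).1 hu' ?_ (by omega) huz
    refine dist_le_of_mem_steps (x := y) (x' := y') ?_ hu (mem_steps.2 ⟨hu', by omega⟩)
    have : G.radius = 3 * G.δ + 1 := rfl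
    omega

lemma exists_level (h : G.radius < n) :
    ∃ k, G.radius * (k + 1) < n ∧ n ≤ G.radius * (k + 1 + 1) := by
  have hpos := G.radius_pos
  have h1 : 1 ≤ (n - 1) / G.radius := (Nat.one_le_div_iff hpos).2 (by omega)
  obtain ⟨k, hk⟩ := Nat.exists_eq_add_of_le' h1
  have h2 := Nat.mul_div_le (n - 1) G.radius
  have h3 := Nat.lt_mul_div_succ (n - 1) hpos
  rw [hk] at h2 h3
  exact ⟨k, by omega, by omega⟩

lemma dist_le_of_hitting_ne_zero (hw : G.dist w a = G.radius)
    (hxw : G.dist x w + G.radius = G.dist x a) (hx : G.radius < G.dist x a)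
    (hz : G.hitting a z x ≠ 0) : G.dist z w ≤ 3 * G.δ := by
  obtain ⟨k, hk, hk'⟩ := exists_level hx
  have hr : G.radius * (k + 1) = G.radius * k + G.radius := by ring
  rw [hitting_of_lt hk hk'] at hz
  obtain ⟨u, hu, huz⟩ := exists_ne_zero_of_finsetAverage_ne_zero hz
  obtain ⟨u', hu1, hu2⟩ :=
    G.exists_between x w (G.dist x a - G.radius * (k + 1)) (by omega)
  have t1 := G.dist_triangle u' w a
  have t2 := G.dist_triangle x u' a
  have hu' : G.dist u' a = G.radius * (k + 1) := by omega
  refine dist_le_of_hitting_ne_zero_of_sphere hw k u u' (mem_steps.1 hu).1 hu' ?_ (by omega) huz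
  refine dist_le_of_mem_steps (x := x) (x' := x) ?_ hu (mem_steps.2 ⟨hu', by omega⟩)
  rw [G.dist_self]
  omega

/-- Walks coming from opposite sides of `a` hit disjoint sets. -/
lemma hitting_eq_zero_or (h : G.dist x a + G.dist y a = G.dist x y) (hx : G.radius < G.dist x a)
    (hy : G.radius < G.dist y a) (z : X) : G.hitting a z x = 0 ∨ G.hitting a z y = 0 := by
  by_contra! hne
  obtain ⟨w, hw, hxw⟩ := exists_dist_target hx.le
  obtain ⟨w', hw', hyw⟩ := exists_dist_target hy.le
  have h1 := dist_le_of_hitting_ne_zero hw hxw hx hne.1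
  have h2 := dist_le_of_hitting_ne_zero hw' hyw hy hne.2
  have t1 := G.dist_triangle x w y
  have t2 := G.dist_triangle w w' y
  have t3 := G.dist_triangle w z w'
  have c1 := G.dist_comm w z
  have c2 := G.dist_comm w' y
  have : G.radius = 3 * G.δ + 1 := rfl
  omega

lemma exists_one_le_abs_hitting_sub (h : G.dist x a + G.dist y a = G.dist x y)
    (hx : G.radius < G.dist x a) (hy : G.radius < G.dist y a) :
    ∃ z ∈ G.ball a G.radius,
      1 ≤ (G.growth : ℝ) ^ G.radius * |G.hitting a z x - G.hitting a z y| := by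
  by_contra! hlt
  have hne : (G.ball a G.radius).Nonempty :=
    ⟨a, (G.mem_ball _ _ _).2 (by rw [G.dist_self]; exact Nat.zero_le _)⟩
  have hcard : ((G.ball a G.radius).card : ℝ) ≤ (G.growth : ℝ) ^ G.radius := by
    exact_mod_cast G.card_ball_le _ _
  have hV : 0 < (G.growth : ℝ) ^ G.radius :=
    lt_of_lt_of_le (by exact_mod_cast hne.card_pos) hcard
  have hpt : ∀ z ∈ G.ball a G.radius, (G.growth : ℝ) ^ G.radius * G.hitting a z x < 1 := by
    intro z hz
    rcases hitting_eq_zero_or h hx hy z with h0 | h0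
    · simp [h0]
    · have := hlt z hz
      rwa [h0, sub_zero, abs_of_nonneg (hitting_mem_Icc a z x).1] at this
  have hsum := Finset.sum_lt_sum_of_nonempty hne hpt
  rw [← Finset.mul_sum, sum_hitting] at hsum
  simp only [Finset.sum_const, nsmul_eq_mul, mul_one] at hsum
  linarith

lemma abs_hitting_sub_le_rpow (z : X) (hd : G.dist x x' ≤ 1) :
    |G.hitting a z x - G.hitting a z x'| ≤
      G.contraction ^ ((G.dist x a : ℝ) / G.radius - 2) := by
  wlog hle : G.dist x' a ≤ G.dist x a generalizing x x'
  · rw [abs_sub_comm]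
    refine (this (by rwa [G.dist_comm]) (by omega)).trans ?_
    refine Real.rpow_le_rpow_of_exponent_ge contraction_pos contraction_lt_one.le ?_
    gcongr
    omega
  have hpos : (0 : ℝ) < G.radius := by exact_mod_cast G.radius_pos
  by_cases hx : G.dist x a ≤ G.radius
  · refine (abs_hitting_sub_le_one a z x x').trans ?_
    refine Real.one_le_rpow_of_pos_of_le_one_of_nonpos contraction_pos contraction_lt_one.le ?_
    have : (G.dist x a : ℝ) / G.radius ≤ 1 := (div_le_one hpos).2 (by exact_mod_cast hx)
    linarith
  · obtain ⟨k, hk, hk'⟩ := exists_level (not_le.1 hx)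
    refine (abs_hitting_sub_le_of_adjacent z hd hk hk' hle).trans ?_
    rw [← Real.rpow_natCast]
    refine Real.rpow_le_rpow_of_exponent_ge contraction_pos contraction_lt_one.le ?_
    have : (G.dist x a : ℝ) / G.radius ≤ k + 1 + 1 := by
      rw [div_le_iff₀' hpos]
      exact_mod_cast hk'
    linarith

lemma hitting_equivariant (g : X ≃ X) (hg : ∀ x y, G.dist (g x) (g y) = G.dist x y)
    (a z x : X) : G.hitting (g a) (g z) (g x) = G.hitting a z x := by
  classical
  refine step_induction (G := G)
    (P := fun x => G.hitting (g a) (g z) (g x) = G.hitting a z x) a ?_ ?_ x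
  · intro x hx
    rw [hitting_of_le hx, hitting_of_le (by rwa [hg])]
    exact if_congr g.apply_eq_iff_eq rfl rfl
  · intro k x hx hx' ih
    have hsteps : G.steps (g a) (G.radius * (k + 1)) (g x) =
        (G.steps a (G.radius * (k + 1)) x).map g.toEmbedding := by
      ext y
      obtain ⟨y, rfl⟩ := g.surjective y
      simp [mem_steps, hg]
    rw [hitting_of_lt hx hx', hitting_of_lt (k := k) (by rwa [hg]) (by rwa [hg]), hsteps,
      finsetAverage, finsetAverage, Finset.sum_map, Finset.card_map]
    exact congrArg (· / _) (Finset.sum_congr rfl ih)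

lemma summable_pow_dist (x : X) {t : ℝ} (ht : 0 ≤ t) (ht' : G.growth * t < 1) :
    Summable fun a => t ^ G.dist x a := by
  classical
  have h0 : 0 ≤ G.growth * t := by positivity
  refine summable_of_sum_le (c := ∑' n : ℕ, (G.growth * t) ^ n) (fun a => by positivity) fun F => ?_
  rw [← Finset.sum_fiberwise_of_maps_to (g := fun a => G.dist x a) (t := F.image (G.dist x))
    fun a ha => Finset.mem_image_of_mem _ ha]
  refine (Finset.sum_le_sum fun n _ => ?_).trans
    ((summable_geometric_of_lt_one h0 ht').sum_le_tsum _ fun n _ => by positivity)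
  calc ∑ a ∈ F with G.dist x a = n, t ^ G.dist x a
      = (F.filter fun a => G.dist x a = n).card * t ^ n := by
        rw [Finset.sum_congr rfl fun a ha => by rw [(Finset.mem_filter.1 ha).2]]
        simp
    _ ≤ (G.growth ^ n : ℕ) * t ^ n := by
        gcongr
        refine le_trans (Finset.card_le_card fun a ha => ?_) (G.card_ball_le x n)
        exact (G.mem_ball _ _ _).2 (Finset.mem_filter.1 ha).2.le
    _ = (G.growth * t) ^ n := by push_cast; rw [mul_pow]

/-- An exponent is large when the decay of the random walk beats the growth of the space. -/
def IsLargeExponent (G : HyperbolicGraph X) (p : ℝ) : Prop :=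
  G.growth * G.contraction ^ (p / G.radius) < 1

lemma exists_isLargeExponent (G : HyperbolicGraph X) :
    ∃ p₀ : ℝ, 1 ≤ p₀ ∧ ∀ p, p₀ ≤ p → G.IsLargeExponent p := by
  have hpos : (0 : ℝ) < G.radius := by exact_mod_cast G.radius_pos
  have hlim : Filter.Tendsto (fun p : ℝ => G.growth * G.contraction ^ (p / G.radius))
      Filter.atTop (nhds (G.growth * 0)) :=
    ((tendsto_rpow_atTop_of_base_lt_one _ (by linarith [G.contraction_pos])
      contraction_lt_one).comp (Filter.tendsto_id.atTop_div_const hpos)).const_mul _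
  rw [mul_zero] at hlim
  obtain ⟨p₀, hp₀⟩ := Filter.eventually_atTop.1 (hlim.eventually_lt_const one_pos)
  exact ⟨max 1 p₀, le_max_left _ _, fun p hp => hp₀ p ((le_max_right _ _).trans hp)⟩

lemma memℓp_hitting_sub_of_adjacent {ι : Type*} [Finite ι] {p : ℝ} (hp : 1 ≤ p)
    (hG : G.IsLargeExponent p) (φ : X → ι → X) (hd : G.dist x x' ≤ 1) :
    Memℓp (fun q : X × ι => G.hitting q.1 (φ q.1 q.2) x - G.hitting q.1 (φ q.1 q.2) x')
      (ENNReal.ofReal p) := by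
  have hθ := G.contraction_pos
  have hp0 : 0 < p := by linarith
  have hsum : Summable fun q : X × ι =>
      ((G.contraction ^ (p / G.radius)) ^ G.dist x q.1) * G.contraction ^ (-(2 * p)) :=
    (summable_pow_dist x (by positivity) hG).mul_of_nonneg
      (Summable.of_finite (f := fun _ : ι => G.contraction ^ (-(2 * p))))
      (fun a => by positivity) (fun i => by positivity)
  refine memℓp_gen ?_
  rw [ENNReal.toReal_ofReal hp0.le]
  refine Summable.of_nonneg_of_le (fun q => by positivity) (fun q => ?_) hsum
  rw [Real.norm_eq_abs]
  refine (Real.rpow_le_rpow (abs_nonneg _) (abs_hitting_sub_le_rpow _ hd) hp0.le).trans_eq ?_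
  rw [← Real.rpow_mul hθ.le, ← Real.rpow_natCast, ← Real.rpow_mul hθ.le, ← Real.rpow_add hθ]
  congr 1
  ring

lemma memℓp_hitting_sub {ι : Type*} [Finite ι] {p : ℝ} (hp : 1 ≤ p)
    (hG : G.IsLargeExponent p) (φ : X → ι → X) (x x' : X) :
    Memℓp (fun q : X × ι => G.hitting q.1 (φ q.1 q.2) x - G.hitting q.1 (φ q.1 q.2) x')
      (ENNReal.ofReal p) := by
  obtain ⟨n, hn⟩ : ∃ n, G.dist x x' = n := ⟨_, rfl⟩
  induction n generalizing x with
  | zero => exact memℓp_hitting_sub_of_adjacent hp hG φ (by omega)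
  | succ n ih =>
    obtain ⟨y, hy, hy'⟩ := G.exists_between x x' 1 (by omega)
    convert (memℓp_hitting_sub_of_adjacent hp hG φ hy.le).add (ih y (by omega)) using 1
    ext q
    simp

lemma dist_le_of_norm_le {ι : Type*} [Finite ι] {p M : ℝ} (hp : 1 ≤ p) (hM : 0 ≤ M)
    {φ : X → ι → X} (hφ : ∀ a, ∀ z ∈ G.ball a G.radius, ∃ i, φ a i = z)
    (f : lp (fun _ : X × ι => ℝ) (ENNReal.ofReal p))
    (hf : ∀ a i, (f : X × ι → ℝ) (a, i) = G.hitting a (φ a i) x - G.hitting a (φ a i) y)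
    (hfM : ‖f‖ ≤ M) :
    (G.dist x y : ℝ) ≤ ((G.growth : ℝ) ^ G.radius * M) ^ p + 2 * G.radius + 1 := by
  classical
  set V : ℝ := (G.growth : ℝ) ^ G.radius
  have hV0 : 0 ≤ V := by positivity
  have hp0 : 0 < p := by linarith
  set J := Finset.Ioo G.radius (G.dist x y - G.radius) with hJ
  have hex : ∀ j ∈ J, ∃ q : X × ι, G.dist x q.1 = j ∧ 1 ≤ V * ‖(f : X × ι → ℝ) q‖ := by
    intro j hj
    rw [hJ, Finset.mem_Ioo] at hj
    obtain ⟨a, ha, ha'⟩ := G.exists_between x y j (by omega)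
    have hc := G.dist_comm y a
    obtain ⟨z, hz, hz'⟩ := exists_one_le_abs_hitting_sub (G := G) (x := x) (y := y) (a := a)
      (by omega) (by omega) (by omega)
    obtain ⟨i, rfl⟩ := hφ a z hz
    exact ⟨(a, i), ha, by rwa [hf, Real.norm_eq_abs]⟩
  obtain ⟨i₀, -⟩ := hφ x x ((G.mem_ball _ _ _).2 (by rw [G.dist_self]; exact Nat.zero_le _))
  have : Nonempty (X × ι) := ⟨(x, i₀)⟩
  choose! q hq hq' using hex
  have hinj : Set.InjOn q J := fun i hi j hj hij => by
    rw [← hq i hi, ← hq j hj, hij]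
  have hsum := lp.sum_rpow_le_norm_rpow (p := ENNReal.ofReal p)
    (by rwa [ENNReal.toReal_ofReal hp0.le]) f (J.image q)
  rw [ENNReal.toReal_ofReal hp0.le, Finset.sum_image hinj] at hsum
  have hcard : (J.card : ℝ) ≤ (V * M) ^ p := by
    calc (J.card : ℝ) = ∑ j ∈ J, (1 : ℝ) := by simp
      _ ≤ ∑ j ∈ J, V ^ p * ‖(f : X × ι → ℝ) (q j)‖ ^ p := by
        refine Finset.sum_le_sum fun j hj => ?_
        rw [← Real.mul_rpow hV0 (norm_nonneg _)]
        exact Real.one_le_rpow (hq' j hj) hp0.le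
      _ = V ^ p * ∑ j ∈ J, ‖(f : X × ι → ℝ) (q j)‖ ^ p := by rw [Finset.mul_sum]
      _ ≤ V ^ p * M ^ p := by
        gcongr
        exact hsum.trans (Real.rpow_le_rpow (lp.norm_nonneg' f) hfM hp0.le)
      _ = (V * M) ^ p := (Real.mul_rpow hV0 hM).symm
  have hlen : G.dist x y ≤ J.card + 2 * G.radius + 1 := by
    rw [hJ, Nat.card_Ioo]
    omega
  have : (G.dist x y : ℝ) ≤ J.card + 2 * G.radius + 1 := by exact_mod_cast hlen
  linarith

end HyperbolicGraph

section WordMetric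

variable {Γ : Type*} [Group Γ] {S : Finset Γ} {d : Γ → Γ → ℕ}

/-- `d` is the word metric of `S`. -/
def IsWordMetric (S : Finset Γ) (d : Γ → Γ → ℕ) : Prop :=
  ∀ g h : Γ, IsLeast {n : ℕ | ∃ l : List Γ, l.length = n ∧
    (∀ s ∈ l, s ∈ S ∨ s⁻¹ ∈ S) ∧ l.prod = g⁻¹ * h} (d g h)

namespace IsWordMetric

lemma dist_le_length (hd : IsWordMetric S d) {g h : Γ} {l : List Γ}
    (hl : ∀ s ∈ l, s ∈ S ∨ s⁻¹ ∈ S) (hprod : l.prod = g⁻¹ * h) : d g h ≤ l.length :=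
  (hd g h).2 ⟨l, rfl, hl, hprod⟩

lemma mul_left (hd : IsWordMetric S d) (g x y : Γ) : d (g * x) (g * y) = d x y := by
  refine (hd (g * x) (g * y)).unique ?_
  have : (g * x)⁻¹ * (g * y) = x⁻¹ * y := by group
  rw [this]
  exact hd x y

lemma dist_self (hd : IsWordMetric S d) (x : Γ) : d x x = 0 :=
  Nat.le_zero.1 (hd.dist_le_length (l := []) (by simp) (by simp))

lemma dist_comm (hd : IsWordMetric S d) (x y : Γ) : d x y = d y x := by
  have key : ∀ x y, d y x ≤ d x y := by
    intro x y
    obtain ⟨l, hlen, hl, hprod⟩ := (hd x y).1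
    have := hd.dist_le_length (g := y) (h := x) (l := (l.map (·⁻¹)).reverse)
      (fun s hs => by
        obtain ⟨t, ht, rfl⟩ := List.mem_map.1 (List.mem_reverse.1 hs)
        rw [inv_inv]
        exact (hl t ht).symm)
      (by rw [← List.prod_inv_reverse, hprod]; group)
    simpa [hlen] using this
  exact le_antisymm (key y x) (key x y)

lemma dist_triangle (hd : IsWordMetric S d) (x y z : Γ) : d x z ≤ d x y + d y z := by
  obtain ⟨l, hlen, hl, hprod⟩ := (hd x y).1
  obtain ⟨l', hlen', hl', hprod'⟩ := (hd y z).1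
  have := hd.dist_le_length (g := x) (h := z) (l := l ++ l')
    (fun s hs => (List.mem_append.1 hs).elim (hl s) (hl' s))
    (by rw [List.prod_append, hprod, hprod']; group)
  simpa [hlen, hlen'] using this

lemma exists_between (hd : IsWordMetric S d) (x y : Γ) (n : ℕ) (hn : n ≤ d x y) :
    ∃ z, d x z = n ∧ d z y = d x y - n := by
  obtain ⟨l, hlen, hl, hprod⟩ := (hd x y).1
  refine ⟨x * (l.take n).prod, ?_⟩
  have h1 : d x (x * (l.take n).prod) ≤ n :=
    (hd.dist_le_length (l := l.take n) (fun s hs => hl s (List.mem_of_mem_take hs))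
      (by group)).trans (by simp)
  have h2 : d (x * (l.take n).prod) y ≤ d x y - n := by
    refine (hd.dist_le_length (l := l.drop n) (fun s hs => hl s (List.mem_of_mem_drop hs))
      ?_).trans (by simp [hlen])
    rw [mul_inv_rev, mul_assoc, ← hprod, ← List.prod_take_mul_prod_drop l n, inv_mul_cancel_left]
  have := hd.dist_triangle x (x * (l.take n).prod) y
  omega

open Pointwise in
open Classical in
lemma mem_pow_iff (hd : IsWordMetric S d) (n : ℕ) (g : Γ) :
    g ∈ (insert 1 (S ∪ S⁻¹)) ^ n ↔ d 1 g ≤ n := by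
  have hone : ∀ g, g ∈ insert 1 (S ∪ S⁻¹) ↔ d 1 g ≤ 1 := by
    intro g
    constructor
    · intro hg
      rw [Finset.mem_insert, Finset.mem_union, Finset.mem_inv'] at hg
      rcases hg with rfl | hg
      · simp [hd.dist_self]
      · exact hd.dist_le_length (l := [g]) (by simpa using hg) (by simp)
    · intro hg
      obtain ⟨l, hlen, hl, hprod⟩ := (hd 1 g).1
      rw [inv_one, one_mul] at hprod
      rw [← hprod, Finset.mem_insert, Finset.mem_union, Finset.mem_inv']
      rcases Nat.le_one_iff_eq_zero_or_eq_one.1 (hlen.trans_le hg) with h | h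
      · simp [List.length_eq_zero_iff.1 h]
      · obtain ⟨s, rfl⟩ := List.length_eq_one_iff.1 h
        right
        simpa using hl
  induction n generalizing g with
  | zero =>
    rw [pow_zero, Finset.mem_one, Nat.le_zero]
    constructor
    · rintro rfl
      exact hd.dist_self 1
    · intro h
      obtain ⟨l, hlen, -, hprod⟩ := (hd 1 g).1
      rw [h, List.length_eq_zero_iff] at hlen
      simpa [hlen] using hprod.symm
  | succ n ih =>
    rw [pow_succ, Finset.mem_mul]
    constructor
    · rintro ⟨y, hy, t, ht, rfl⟩
      have h1 := (ih y).1 hy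
      have h2 := (hone t).1 ht
      have h3 := hd.dist_triangle 1 y (y * t)
      have h4 := hd.mul_left y 1 t
      rw [mul_one] at h4
      omega
    · intro h
      obtain ⟨y, hy, hy'⟩ := hd.exists_between 1 g (min n (d 1 g)) (min_le_right _ _)
      refine ⟨y, (ih y).2 (by omega), y⁻¹ * g, (hone _).2 ?_, by group⟩
      have h4 := hd.mul_left y⁻¹ y g
      rw [inv_mul_cancel] at h4
      omega

open Pointwise in
open Classical in
/-- A hyperbolic group as a hyperbolic graph. -/
noncomputable def toHyperbolicGraph (hd : IsWordMetric S d) (δ : ℕ)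
    (hδ : ∀ x y z w, d x w + d y z ≤ max (d x y + d z w) (d x z + d y w) + δ) :
    HyperbolicGraph Γ where
  dist := d
  δ := δ
  growth := (insert 1 (S ∪ S⁻¹)).card
  ball x n := ((insert 1 (S ∪ S⁻¹)) ^ n).map (Equiv.mulLeft x).toEmbedding
  dist_self := hd.dist_self
  dist_comm := hd.dist_comm
  dist_triangle := hd.dist_triangle
  exists_between := hd.exists_between
  hyperbolic := hδ
  mem_ball x y n := by
    rw [Finset.mem_map_equiv, hd.mem_pow_iff, ← hd.mul_left x]
    simp
  card_ball_le x n := by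
    rw [Finset.card_map]
    exact Finset.card_pow_le

end IsWordMetric

end WordMetric

/-- Yu's theorem (Corollary 4.3 of Alvarez–Lafforgue). Let `Γ` be a hyperbolic group,
i.e. a group with a finite generating set `S` whose associated word metric `d` is
`δ`-hyperbolic. Then there are `p₀ ≥ 1` and `m : ℕ` such that for every real `p ≥ p₀`
there is a proper cocycle `b : Γ → ℓ^p(Γ × Fin m)` for the representation
`(π g f) (x, i) = f (g⁻¹ x, i)`; in other words `Γ` admits a proper affine isometric
action on `ℓ^p` of a finite disjoint union of copies of `Γ`. -/
theorem hyperbolic_group_proper_lp_cocycle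
    {Γ : Type*} [Group Γ] (S : Finset Γ)
    (hgen : Subgroup.closure (S : Set Γ) = ⊤)
    (d : Γ → Γ → ℕ)
    (hd : ∀ g h : Γ, IsLeast {n : ℕ | ∃ l : List Γ, l.length = n ∧
      (∀ s ∈ l, s ∈ S ∨ s⁻¹ ∈ S) ∧ l.prod = g⁻¹ * h} (d g h))
    (δ : ℝ) (hδ : 0 ≤ δ)
    (hhyp : ∀ x₁ x₂ x₃ x₄ : Γ, (d x₁ x₄ : ℝ) + (d x₂ x₃ : ℝ) ≤
      max ((d x₁ x₂ : ℝ) + (d x₃ x₄ : ℝ)) ((d x₁ x₃ : ℝ) + (d x₂ x₄ : ℝ)) + δ) :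
    ∃ p₀ : ℝ, 1 ≤ p₀ ∧ ∃ m : ℕ, ∀ p : ℝ, p₀ ≤ p →
      ∃ b : Γ → lp (fun _ : Γ × Fin m => ℝ) (ENNReal.ofReal p),
        -- cocycle identity `b (g h) = b g + π g (b h)` where `(π g f) (x, i) = f (g⁻¹ x, i)`
        (∀ g h x : Γ, ∀ i : Fin m,
          (b (g * h) : Γ × Fin m → ℝ) (x, i) =
            (b g : Γ × Fin m → ℝ) (x, i) + (b h : Γ × Fin m → ℝ) (g⁻¹ * x, i)) ∧
        -- properness of the cocycle
        (∀ M : ℝ, 0 ≤ M → {g : Γ | ‖b g‖ ≤ M}.Finite) := by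
  have hδ' : ∀ x y z w, d x w + d y z ≤ max (d x y + d z w) (d x z + d y w) + ⌈δ⌉₊ := by
    intro x y z w
    have h := (hhyp x y z w).trans (add_le_add_right (Nat.le_ceil δ) _)
    exact_mod_cast h
  have hw : IsWordMetric S d := hd
  set G := hw.toHyperbolicGraph ⌈δ⌉₊ hδ'
  have hinv : ∀ g x y : Γ, G.dist (Equiv.mulLeft g x) (Equiv.mulLeft g y) = G.dist x y :=
    hw.mul_left
  obtain ⟨p₀, hp₀, hlarge⟩ := G.exists_isLargeExponent
  refine ⟨p₀, hp₀, (G.ball 1 G.radius).card, fun p hp => ?_⟩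
  set e := (G.ball 1 G.radius).equivFin.symm
  set φ : Γ → Fin (G.ball 1 G.radius).card → Γ := fun x i => x * e i
  have hφ : ∀ a, ∀ z ∈ G.ball a G.radius, ∃ i, φ a i = z := by
    intro a z hz
    have hmem : a⁻¹ * z ∈ G.ball 1 G.radius := by
      rw [G.mem_ball] at hz ⊢
      rw [← hinv a]
      simpa using hz
    exact ⟨e.symm ⟨_, hmem⟩, by simp [φ]⟩
  refine ⟨fun g => ⟨_, HyperbolicGraph.memℓp_hitting_sub (hp₀.trans hp) (hlarge p hp) φ g 1⟩,
    fun g h x i => ?_, fun M hM => ?_⟩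
  · have key : ∀ y, G.hitting (g⁻¹ * x) (φ (g⁻¹ * x) i) y = G.hitting x (φ x i) (g * y) := by
      intro y
      rw [← HyperbolicGraph.hitting_equivariant (Equiv.mulLeft g) (hinv g)]
      simp [φ, mul_assoc]
    change G.hitting x (φ x i) (g * h) - G.hitting x (φ x i) 1 =
      G.hitting x (φ x i) g - G.hitting x (φ x i) 1 +
        (G.hitting (g⁻¹ * x) (φ (g⁻¹ * x) i) h - G.hitting (g⁻¹ * x) (φ (g⁻¹ * x) i) 1)
    rw [key, key, mul_one]
    ring
  · refine (G.ball 1 ⌊((G.growth : ℝ) ^ G.radius * M) ^ p + 2 * G.radius + 1⌋₊).finite_toSet.subset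
      fun g hg => ?_
    rw [Finset.mem_coe, G.mem_ball, G.dist_comm]
    exact Nat.le_floor (HyperbolicGraph.dist_le_of_norm_le (hp₀.trans hp) hM hφ _
      (fun a i => rfl) hg)
end

section
/- Let δ ≥ 0 be a real number and (X,d) a δ-hyperbolic, weakly δ-geodesic, uniformly locally finite metric space equipped with an isometric action of a group G. Define d'(x,y) to be the least k ∈ ℕ for which there exist points x₀ = x, x₁, …, x_k = y of X with d(x_j, x_{j+1}) ≤ δ + 1 for all 0 ≤ j ≤ k−1. Then d' is a well-defined metric on X satisfying d ≤ (δ+1)·d' and d' ≤ d + 1 (so d and d' are quasi-isometric); moreover (X,d') takes values in ℕ, is geodesic in the discrete sense (for all x,y and every natural number k ≤ d'(x,y) there exists z with d'(x,z) = k and d'(z,y) = d'(x,y) − k), is uniformly locally finite, is δ'-hyperbolic for some real δ' ≥ 0, and G acts on (X,d') by isometries. -/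
/-- The set of lengths of chains from `x` to `y` whose steps have length at most `δ + 1`. -/
abbrev chainLengths {X : Type*} [MetricSpace X] (δ : ℝ) (x y : X) : Set ℕ :=
  {k : ℕ | ∃ c : ℕ → X, c 0 = x ∧ c k = y ∧ ∀ j < k, dist (c j) (c (j + 1)) ≤ δ + 1}

/-- The least length of a chain from `x` to `y` whose steps have length at most `δ + 1`. -/
noncomputable def chainDist {X : Type*} [MetricSpace X] (δ : ℝ) (x y : X) : ℕ :=
  sInf (chainLengths δ x y)

/-- Four-point hyperbolicity with constant `δ`. -/
def FourPointHyperbolic (X : Type*) [MetricSpace X] (δ : ℝ) : Prop :=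
  ∀ x₁ x₂ x₃ x₄ : X, dist x₁ x₄ + dist x₂ x₃ ≤
    max (dist x₁ x₂ + dist x₃ x₄) (dist x₁ x₃ + dist x₂ x₄) + δ

/-- Existence of approximate geodesics with error `δ`. -/
def WeaklyGeodesic (X : Type*) [MetricSpace X] (δ : ℝ) : Prop :=
  ∀ x y : X, ∀ s : ℝ, 0 ≤ s → s ≤ dist x y + δ →
    ∃ z : X, dist x z ≤ s ∧ dist z y ≤ dist x y - s + δ

/-- The Gromov product of `x` and `y` based at `w`. -/
noncomputable def gromovProduct {X : Type*} [MetricSpace X] (w x y : X) : ℝ :=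
  (dist w x + dist w y - dist x y) / 2

section Chains

variable {X : Type*} [MetricSpace X] {δ : ℝ}

lemma segment_mem_chainLengths {c : ℕ → X} {n i j : ℕ}
    (hc : ∀ t < n, dist (c t) (c (t + 1)) ≤ δ + 1) (hij : i ≤ j) (hj : j ≤ n) :
    j - i ∈ chainLengths δ (c i) (c j) :=
  ⟨fun t => c (i + t), rfl, congrArg c (by omega), fun t ht => hc (i + t) (by omega)⟩

lemma add_mem_chainLengths {x y z : X} {k l : ℕ} (hk : k ∈ chainLengths δ x y)
    (hl : l ∈ chainLengths δ y z) : k + l ∈ chainLengths δ x z := by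
  obtain ⟨c, c0, ck, hc⟩ := hk
  obtain ⟨e, e0, el, he⟩ := hl
  refine ⟨fun j => if j ≤ k then c j else e (j - k), by simp [c0], ?_, fun j hj => ?_⟩
  · rcases Nat.eq_zero_or_pos l with rfl | hl
    · simp [ck, ← e0, el]
    · simp [el, hl.ne']
  · rcases lt_trichotomy j k with h | rfl | h
    · simpa [h.le, Nat.succ_le_iff.2 h] using hc j h
    · simpa [ck, ← e0] using he 0 (by omega)
    · have h₁ : ¬ j ≤ k := by omega
      have h₂ : ¬ j + 1 ≤ k := by omega
      simpa [h₁, h₂, show j + 1 - k = j - k + 1 by omega] using he (j - k) (by omega)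

lemma chainLengths_symm {x y : X} {k : ℕ} (hk : k ∈ chainLengths δ x y) :
    k ∈ chainLengths δ y x := by
  obtain ⟨c, c0, ck, hc⟩ := hk
  refine ⟨fun j => c (k - j), by simp [ck], by simp [c0], fun j hj => ?_⟩
  have h := hc (k - (j + 1)) (by omega)
  rw [show k - (j + 1) + 1 = k - j by omega] at h
  simpa [dist_comm] using h

lemma one_mem_chainLengths {x y : X} (h : dist x y ≤ δ + 1) : 1 ∈ chainLengths δ x y :=
  ⟨fun j => if j = 0 then x else y, by simp, by simp, fun j hj => by
    obtain rfl : j = 0 := by omega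
    simpa using h⟩

lemma dist_le_of_mem_chainLengths {x y : X} {k : ℕ} (hk : k ∈ chainLengths δ x y) :
    dist x y ≤ (δ + 1) * k := by
  obtain ⟨c, rfl, rfl, hc⟩ := hk
  calc dist (c 0) (c k) ≤ ∑ j ∈ Finset.range k, (δ + 1) :=
        dist_le_range_sum_of_dist_le k fun {j} hj => hc j hj
    _ = (δ + 1) * k := by rw [Finset.sum_const, Finset.card_range, nsmul_eq_mul, mul_comm]

lemma exists_mem_chainLengths_le (hδ : 0 ≤ δ) (hgeo : WeaklyGeodesic X δ) (N : ℕ) :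
    ∀ x y : X, dist x y < N + 1 → ∃ k ≤ N + 1, k ∈ chainLengths δ x y := by
  induction N with
  | zero =>
    intro x y h
    exact ⟨1, le_rfl, one_mem_chainLengths (by push_cast at h; linarith)⟩
  | succ N ih =>
    intro x y h
    push_cast at h
    rcases lt_or_ge (dist x y) 1 with h1 | h1
    · exact ⟨1, by omega, one_mem_chainLengths (by linarith)⟩
    · obtain ⟨z, hxz, hzy⟩ := hgeo x y (δ + 1) (by linarith) (by linarith)
      obtain ⟨k, hk, hkm⟩ := ih z y (by linarith)
      exact ⟨1 + k, by omega, add_mem_chainLengths (one_mem_chainLengths hxz) hkm⟩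

lemma chainDist_le_of_mem {x y : X} {k : ℕ} (hk : k ∈ chainLengths δ x y) :
    chainDist δ x y ≤ k := Nat.sInf_le hk

lemma chainDist_self (x : X) : chainDist δ x x = 0 :=
  Nat.le_zero.1 (chainDist_le_of_mem ⟨fun _ => x, rfl, rfl, by simp⟩)

lemma chainDist_comm (x y : X) : chainDist δ x y = chainDist δ y x :=
  congrArg sInf (Set.ext fun _ => ⟨chainLengths_symm, chainLengths_symm⟩)

variable (hδ : 0 ≤ δ) (hgeo : WeaklyGeodesic X δ)

include hδ hgeo

lemma chainDist_mem (x y : X) : chainDist δ x y ∈ chainLengths δ x y :=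
  let ⟨k, _, hk⟩ := exists_mem_chainLengths_le hδ hgeo _ x y (Nat.lt_floor_add_one _)
  Nat.sInf_mem ⟨k, hk⟩

lemma chainDist_le_dist_add_one (x y : X) : (chainDist δ x y : ℝ) ≤ dist x y + 1 := by
  obtain ⟨k, hk, hkm⟩ := exists_mem_chainLengths_le hδ hgeo _ x y (Nat.lt_floor_add_one _)
  calc (chainDist δ x y : ℝ) ≤ (⌊dist x y⌋₊ + 1 : ℕ) :=
        Nat.cast_le.2 ((chainDist_le_of_mem hkm).trans hk)
    _ ≤ dist x y + 1 := by
        push_cast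
        gcongr
        exact Nat.floor_le dist_nonneg

lemma chainDist_triangle (x y z : X) :
    chainDist δ x z ≤ chainDist δ x y + chainDist δ y z :=
  chainDist_le_of_mem
    (add_mem_chainLengths (chainDist_mem hδ hgeo x y) (chainDist_mem hδ hgeo y z))

lemma dist_le_mul_chainDist (x y : X) : dist x y ≤ (δ + 1) * chainDist δ x y :=
  dist_le_of_mem_chainLengths (chainDist_mem hδ hgeo x y)

lemma chainDist_eq_zero_iff (x y : X) : chainDist δ x y = 0 ↔ x = y := by
  refine ⟨fun h => ?_, fun h => h ▸ chainDist_self x⟩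
  have := dist_le_mul_chainDist hδ hgeo x y
  rw [h] at this
  exact dist_le_zero.1 (by simpa using this)

/-- A chain of minimal length is a geodesic for the chain distance. -/
lemma exists_chainDist_geodesic (x y : X) : ∃ c : ℕ → X, c 0 = x ∧ c (chainDist δ x y) = y ∧
    (∀ j < chainDist δ x y, dist (c j) (c (j + 1)) ≤ δ + 1) ∧
    ∀ i j, i ≤ j → j ≤ chainDist δ x y → chainDist δ (c i) (c j) = j - i := by
  obtain ⟨c, c0, cn, hc⟩ := chainDist_mem hδ hgeo x y
  refine ⟨c, c0, cn, hc, fun i j hij hj => ?_⟩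
  have h₁ := chainDist_le_of_mem (segment_mem_chainLengths hc (Nat.zero_le i) (hij.trans hj))
  have h₂ := chainDist_le_of_mem (segment_mem_chainLengths hc hij hj)
  have h₃ := chainDist_le_of_mem (segment_mem_chainLengths hc hj le_rfl)
  have h₄ := chainDist_triangle hδ hgeo (c 0) (c i) (c (chainDist δ x y))
  have h₅ := chainDist_triangle hδ hgeo (c i) (c j) (c (chainDist δ x y))
  have h₆ : chainDist δ (c 0) (c (chainDist δ x y)) = chainDist δ x y := by rw [c0, cn]
  omega

end Chains

section Hyperbolic

variable {X : Type*} [MetricSpace X] {δ : ℝ}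

lemma FourPointHyperbolic.min_gromovProduct_le (hhyp : FourPointHyperbolic X δ) (w x y z : X) :
    min (gromovProduct w x y) (gromovProduct w y z) ≤ gromovProduct w x z + δ / 2 := by
  have h := hhyp x w y z
  unfold gromovProduct
  rw [dist_comm x w] at h
  rcases le_max_iff.1 (sub_le_iff_le_add.2 h) with h | h
  · exact (min_le_right _ _).trans (by linarith)
  · exact (min_le_left _ _).trans (by linarith)

lemma gromovProduct_comm (w x y : X) : gromovProduct w x y = gromovProduct w y x := by
  unfold gromovProduct
  rw [dist_comm x y]
  ring

open Classical in
/-- The visual quasi-ultrametric `exp (-ε (x | y)_w)`, set to `0` on the diagonal. -/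
noncomputable def visualGauge (ε : ℝ) (w x y : X) : NNReal :=
  if x = y then 0 else (Real.exp (-(ε * gromovProduct w x y))).toNNReal

lemma coe_visualGauge_of_ne {ε : ℝ} {w x y : X} (h : x ≠ y) :
    (visualGauge ε w x y : ℝ) = Real.exp (-(ε * gromovProduct w x y)) := by
  simp [visualGauge, h, Real.exp_nonneg]

lemma coe_visualGauge_le (ε : ℝ) (w x y : X) :
    (visualGauge ε w x y : ℝ) ≤ Real.exp (-(ε * gromovProduct w x y)) := by
  rcases eq_or_ne x y with rfl | h
  · simp [visualGauge, Real.exp_nonneg]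
  · exact (coe_visualGauge_of_ne h).le

lemma visualGauge_self (ε : ℝ) (w x : X) : visualGauge ε w x x = 0 := by simp [visualGauge]

lemma visualGauge_comm (ε : ℝ) (w x y : X) : visualGauge ε w x y = visualGauge ε w y x := by
  rcases eq_or_ne x y with rfl | h
  · rfl
  · simp [visualGauge, h, h.symm, gromovProduct_comm w x y]

lemma coe_visualGauge_le_mul_max (hhyp : FourPointHyperbolic X δ) (hδ : 0 ≤ δ) {ε : ℝ}
    (hε : 0 ≤ ε) (w x y z : X) : (visualGauge ε w x z : ℝ) ≤
      Real.exp (ε * δ / 2) * max (visualGauge ε w x y : ℝ) (visualGauge ε w y z) := by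
  have hK : 1 ≤ Real.exp (ε * δ / 2) := Real.one_le_exp (by positivity)
  rcases eq_or_ne x z with rfl | hxz
  · rw [visualGauge_self, NNReal.coe_zero]
    positivity
  rcases eq_or_ne x y with rfl | hxy
  · exact (le_max_right _ _).trans (le_mul_of_one_le_left (by positivity) hK)
  rcases eq_or_ne y z with rfl | hyz
  · exact (le_max_left _ _).trans (le_mul_of_one_le_left (by positivity) hK)
  rw [coe_visualGauge_of_ne hxz, coe_visualGauge_of_ne hxy, coe_visualGauge_of_ne hyz,
    mul_max_of_nonneg _ _ (Real.exp_nonneg _), ← Real.exp_add, ← Real.exp_add, le_max_iff,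
    Real.exp_le_exp, Real.exp_le_exp]
  rcases min_le_iff.1 (hhyp.min_gromovProduct_le w x y z) with h | h
  · exact .inl (by linarith [mul_le_mul_of_nonneg_left h hε])
  · exact .inr (by linarith [mul_le_mul_of_nonneg_left h hε])

lemma visualGauge_le_two_mul_max (hhyp : FourPointHyperbolic X δ) (hδ : 0 ≤ δ) {ε : ℝ}
    (hε : 0 ≤ ε) (hεδ : Real.exp (ε * δ) ≤ 2) (w x₁ x₂ x₃ x₄ : X) : visualGauge ε w x₁ x₄ ≤
      2 * max (visualGauge ε w x₁ x₂)
        (max (visualGauge ε w x₂ x₃) (visualGauge ε w x₃ x₄)) := by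
  have hK : 1 ≤ Real.exp (ε * δ / 2) := Real.one_le_exp (by positivity)
  have hKK : Real.exp (ε * δ / 2) * Real.exp (ε * δ / 2) ≤ 2 := by
    rwa [← Real.exp_add, add_halves]
  have h₁ := coe_visualGauge_le_mul_max hhyp hδ hε w x₁ x₂ x₄
  have h₂ := coe_visualGauge_le_mul_max hhyp hδ hε w x₂ x₃ x₄
  rw [← NNReal.coe_le_coe]
  push_cast
  set K := Real.exp (ε * δ / 2)
  set a : ℝ := (visualGauge ε w x₁ x₂ : ℝ)
  set m : ℝ := max (visualGauge ε w x₂ x₃ : ℝ) (visualGauge ε w x₃ x₄)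
  have ha : 0 ≤ max a m := le_max_of_le_left NNReal.zero_le_coe
  calc (visualGauge ε w x₁ x₄ : ℝ) ≤ K * max a (visualGauge ε w x₂ x₄) := h₁
    _ ≤ K * (K * max a m) := by
        gcongr
        exact max_le ((le_max_left a m).trans (le_mul_of_one_le_left ha hK))
          (h₂.trans (by gcongr; exact le_max_right a m))
    _ ≤ 2 * max a m := by
        rw [← mul_assoc]
        gcongr

/-- Exponential divergence: along a chain, the quantities `exp (-ε (x | y)_w)` satisfy the
triangle inequality up to a factor two. -/
lemma exp_neg_gromovProduct_le_sum (hhyp : FourPointHyperbolic X δ) (hδ : 0 ≤ δ) {ε : ℝ}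
    (hε : 0 ≤ ε) (hεδ : Real.exp (ε * δ) ≤ 2) (w : X) (c : ℕ → X) (n : ℕ) (hne : c 0 ≠ c n) :
    Real.exp (-(ε * gromovProduct w (c 0) (c n))) ≤
      2 * ∑ j ∈ Finset.range n, Real.exp (-(ε * gromovProduct w (c j) (c (j + 1)))) := by
  rw [← coe_visualGauge_of_ne hne]
  refine (PseudoMetricSpace.le_two_mul_dist_ofPreNNDist (visualGauge ε w) (visualGauge_self ε w)
    (visualGauge_comm ε w) (visualGauge_le_two_mul_max hhyp hδ hε hεδ w) _ _).trans ?_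
  gcongr
  refine (@dist_le_range_sum_dist X (PseudoMetricSpace.ofPreNNDist (visualGauge ε w)
    (visualGauge_self ε w) (visualGauge_comm ε w)) c n).trans ?_
  refine Finset.sum_le_sum fun j _ => ?_
  exact (PseudoMetricSpace.dist_ofPreNNDist_le _ _ _ _ _).trans (coe_visualGauge_le ε w _ _)

lemma sum_range_pow_le_two_mul_inv {q : ℝ} (hq0 : 0 ≤ q) (hq1 : q < 1) (n i : ℕ) :
    ∑ j ∈ Finset.range n, q ^ ((i - j) + (j - i)) ≤ 2 * (1 - q)⁻¹ := by
  have hgeom (m : ℕ) : ∑ k ∈ Finset.range m, q ^ k ≤ (1 - q)⁻¹ := by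
    simpa using geom_sum_Ico_le_of_lt_one (m := 0) (n := m) hq0 hq1
  have key : ∀ i n : ℕ, ∑ j ∈ Finset.range n, q ^ ((i - j) + (j - i)) ≤
      ∑ k ∈ Finset.range i, q ^ (k + 1) + ∑ k ∈ Finset.range n, q ^ k := by
    intro i
    induction i with
    | zero => simp
    | succ i ih =>
      intro n
      cases n with
      | zero => simpa using Finset.sum_nonneg fun _ _ => pow_nonneg hq0 _
      | succ n =>
        rw [Finset.sum_range_succ', Finset.sum_range_succ _ i, Finset.sum_range_succ _ n]
        have := ih n
        have := pow_nonneg hq0 n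
        simp only [Nat.add_sub_add_right, Nat.sub_zero, Nat.zero_sub, Nat.add_zero]
        linarith
  have hshift : ∑ k ∈ Finset.range i, q ^ (k + 1) ≤ ∑ k ∈ Finset.range i, q ^ k :=
    Finset.sum_le_sum fun k _ => pow_le_pow_of_le_one hq0 hq1.le k.le_succ
  linarith [key i n, hgeom i, hgeom n]

/-- A chain with steps at most `L` which is a quasi-geodesic passes close to every point `w` at
which its endpoints have bounded Gromov product. -/
lemma exists_dist_chain_le (hhyp : FourPointHyperbolic X δ) (hδ : 0 ≤ δ) (L R : ℝ) :
    ∃ D : ℝ, ∀ (w : X) (c : ℕ → X) (n : ℕ), (∀ j < n, dist (c j) (c (j + 1)) ≤ L) →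
      (∀ i j, i ≤ j → j ≤ n → ((j - i : ℕ) : ℝ) ≤ dist (c i) (c j) + 1) →
      gromovProduct w (c 0) (c n) ≤ R → ∃ j ≤ n, dist w (c j) ≤ D := by
  set ε : ℝ := Real.log 2 / (δ + 1)
  have hε : 0 < ε := div_pos (Real.log_pos one_lt_two) (by linarith)
  have hεδ : Real.exp (ε * δ) ≤ 2 := by
    rw [← Real.le_log_iff_exp_le two_pos]
    calc ε * δ ≤ ε * (δ + 1) := by gcongr; linarith
      _ = Real.log 2 := div_mul_cancel₀ _ (by linarith)
  set q : ℝ := Real.exp (-(ε / 4)) with hq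
  have hq1 : q < 1 := Real.exp_zero ▸ Real.exp_lt_exp.2 (by linarith)
  have hS : 0 < 2 * (2 * (1 - q)⁻¹) := by
    have : 0 < 1 - q := by linarith
    positivity
  set S : ℝ := 2 * (2 * (1 - q)⁻¹) with hSdef
  refine ⟨max R (2 * (R + L + 1 / 4 + Real.log S / ε)), fun w c n hstep hqg hR => ?_⟩
  rcases eq_or_ne (c 0) (c n) with heq | hne
  · refine ⟨0, n.zero_le, le_max_of_le_left ?_⟩
    simpa [gromovProduct, ← heq] using hR
  obtain ⟨i, hi, hmin⟩ := Finset.exists_min_image (Finset.range (n + 1))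
    (fun j => dist w (c j)) ⟨0, by simp⟩
  refine ⟨i, by simpa [Nat.lt_succ_iff] using hi, le_max_of_le_right ?_⟩
  have hin : i ≤ n := by simpa [Nat.lt_succ_iff] using hi
  set D := dist w (c i)
  have hterm : ∀ j ∈ Finset.range n, Real.exp (-(ε * gromovProduct w (c j) (c (j + 1)))) ≤
      Real.exp (-(ε * (D / 2 - 1 / 4 - L))) * q ^ ((i - j) + (j - i)) := by
    intro j hj
    have hjn : j < n := Finset.mem_range.1 hj
    have hDj : D ≤ dist w (c j) := hmin j (by simp; omega)
    have hfar : (((i - j) + (j - i) : ℕ) : ℝ) ≤ dist (c i) (c j) + 1 := by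
      rcases le_total i j with h | h
      · simpa [Nat.sub_eq_zero_of_le h] using hqg i j h hjn.le
      · simpa [Nat.sub_eq_zero_of_le h, dist_comm] using hqg j i h hin
    have htri : dist (c i) (c j) ≤ D + dist w (c j) := dist_triangle_left _ _ _
    have hnext : dist w (c j) ≤ dist w (c (j + 1)) + dist (c j) (c (j + 1)) :=
      dist_triangle_right _ _ _
    have hs := hstep j hjn
    rw [hq, ← Real.exp_nat_mul, ← Real.exp_add, Real.exp_le_exp]
    have hprod : D / 2 - 1 / 4 - L + (((i - j) + (j - i) : ℕ) : ℝ) / 4 ≤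
        gromovProduct w (c j) (c (j + 1)) := by
      unfold gromovProduct
      linarith
    linarith [mul_le_mul_of_nonneg_left hprod hε.le]
  have hsum := exp_neg_gromovProduct_le_sum hhyp hδ hε.le hεδ w c n hne
  have hbound : Real.exp (-(ε * R)) ≤ Real.exp (-(ε * (D / 2 - 1 / 4 - L))) * S :=
    calc Real.exp (-(ε * R)) ≤ Real.exp (-(ε * gromovProduct w (c 0) (c n))) := by gcongr
      _ ≤ 2 * ∑ j ∈ Finset.range n,
          Real.exp (-(ε * (D / 2 - 1 / 4 - L))) * q ^ ((i - j) + (j - i)) := by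
          refine hsum.trans ?_
          gcongr with j hj
          exact hterm j hj
      _ ≤ 2 * (Real.exp (-(ε * (D / 2 - 1 / 4 - L))) * (2 * (1 - q)⁻¹)) := by
          rw [← Finset.mul_sum]
          gcongr
          exact sum_range_pow_le_two_mul_inv (Real.exp_nonneg _) hq1 n i
      _ = Real.exp (-(ε * (D / 2 - 1 / 4 - L))) * S := by rw [hSdef]; ring
  rw [← Real.exp_log hS, ← Real.exp_add, Real.exp_le_exp] at hbound
  have hlog : ε * (Real.log S / ε) = Real.log S := mul_div_cancel₀ _ hε.ne'
  have : ε * (D / 2) ≤ ε * (R + L + 1 / 4 + Real.log S / ε) := by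
    rw [mul_add _ _ (Real.log S / ε), hlog]
    linarith
  linarith [le_of_mul_le_mul_left this hε]

/-- Almost additivity of `d` at `w` implies almost additivity of the chain distance. -/
lemma exists_chainDist_add_le (hhyp : FourPointHyperbolic X δ) (hδ : 0 ≤ δ)
    (hgeo : WeaklyGeodesic X δ) (R : ℝ) :
    ∃ C : ℝ, ∀ w x y : X, gromovProduct w x y ≤ R →
      (chainDist δ x w : ℝ) + chainDist δ w y ≤ chainDist δ x y + C := by
  obtain ⟨D, hD⟩ := exists_dist_chain_le hhyp hδ (δ + 1) R
  refine ⟨2 * (D + 1), fun w x y hR => ?_⟩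
  obtain ⟨c, c0, cn, hstep, hc⟩ := exists_chainDist_geodesic hδ hgeo x y
  obtain ⟨j, hj, hwj⟩ := hD w c _ hstep
    (fun i j hij hj => by
      rw [← hc i j hij hj]
      exact chainDist_le_dist_add_one hδ hgeo _ _)
    (by rwa [c0, cn])
  have h₁ := hc 0 j j.zero_le hj
  have h₂ := hc j _ hj le_rfl
  rw [c0] at h₁
  rw [cn] at h₂
  have h₃ := chainDist_triangle hδ hgeo x (c j) w
  have h₄ := chainDist_triangle hδ hgeo w (c j) y
  have h₅ := chainDist_le_dist_add_one hδ hgeo w (c j)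
  rw [chainDist_comm (c j) w] at h₃
  have h₆ : chainDist δ x w + chainDist δ w y ≤
      chainDist δ x y + 2 * chainDist δ w (c j) := by omega
  have h₇ : (chainDist δ x w : ℝ) + chainDist δ w y ≤
      chainDist δ x y + 2 * chainDist δ w (c j) := by exact_mod_cast h₆
  linarith

/-- If `d(a, b) + d(p, q)` is the largest of the three sums of opposite distances, up to an
error, then some point lies close to approximate geodesics from `a` to `b` and from `p` to `q`. -/
lemma exists_gromovProduct_le (hhyp : FourPointHyperbolic X δ) (hδ : 0 ≤ δ)
    (hgeo : WeaklyGeodesic X δ) {a b p q : X}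
    (h₁ : dist a p + dist b q ≤ dist a b + dist p q + δ)
    (h₂ : dist a q + dist p b ≤ dist a b + dist p q + δ) :
    ∃ w : X, gromovProduct w a b ≤ 3 * δ ∧ gromovProduct w p q ≤ 3 * δ := by
  have t₁ : dist p b ≤ dist a p + dist a b := by
    rw [dist_comm a p]; exact dist_triangle _ _ _
  have t₂ : dist a p ≤ dist a b + dist p b := by
    rw [dist_comm p b]; exact dist_triangle _ _ _
  obtain ⟨w, haw, hwb⟩ := hgeo a b ((dist a p + dist a b - dist p b) / 2)
    (by linarith) (by linarith)
  have hp := hhyp a p w b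
  have hq := hhyp a q w b
  simp only [gromovProduct]
  rw [dist_comm q b] at hq
  refine ⟨w, by rw [dist_comm w a]; linarith, ?_⟩
  rw [dist_comm w p, dist_comm w q]
  rcases le_max_iff.1 (sub_le_iff_le_add.2 hp) with hp | hp <;>
  rcases le_max_iff.1 (sub_le_iff_le_add.2 hq) with hq | hq <;> linarith

lemma exists_chainDist_hyperbolic (hhyp : FourPointHyperbolic X δ) (hδ : 0 ≤ δ)
    (hgeo : WeaklyGeodesic X δ) :
    ∃ δ' : ℝ, 0 ≤ δ' ∧ ∀ x₁ x₂ x₃ x₄ : X,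
      (chainDist δ x₁ x₄ : ℝ) + (chainDist δ x₂ x₃ : ℝ) ≤
        max ((chainDist δ x₁ x₂ : ℝ) + (chainDist δ x₃ x₄ : ℝ))
          ((chainDist δ x₁ x₃ : ℝ) + (chainDist δ x₂ x₄ : ℝ)) + δ' := by
  obtain ⟨C, hC⟩ := exists_chainDist_add_le hhyp hδ hgeo (3 * δ)
  have cross : ∀ a b p q : X, dist a p + dist b q ≤ dist a b + dist p q →
      dist a q + dist p b ≤ dist a b + dist p q + δ →
      (chainDist δ a q : ℝ) + chainDist δ p b ≤
        chainDist δ a b + chainDist δ p q + 2 * C := by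
    intro a b p q h₁ h₂
    obtain ⟨w, hab, hpq⟩ := exists_gromovProduct_le hhyp hδ hgeo (h₁.trans (by linarith)) h₂
    have h₃ := hC w a b hab
    have h₄ := hC w p q hpq
    have h₅ : (chainDist δ a q : ℝ) ≤ chainDist δ a w + chainDist δ w q := by
      exact_mod_cast chainDist_triangle hδ hgeo a w q
    have h₆ : (chainDist δ p b : ℝ) ≤ chainDist δ p w + chainDist δ w b := by
      exact_mod_cast chainDist_triangle hδ hgeo p w b
    linarith
  refine ⟨max 0 (2 * C), le_max_left _ _, fun x₁ x₂ x₃ x₄ => ?_⟩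
  refine le_trans ?_ (add_le_add_right (le_max_right 0 (2 * C)) _)
  have h := hhyp x₁ x₂ x₃ x₄
  rcases le_total (dist x₁ x₂ + dist x₃ x₄) (dist x₁ x₃ + dist x₂ x₄) with h' | h'
  · rw [max_eq_right h'] at h
    exact (cross x₁ x₃ x₂ x₄ h' h).trans (add_le_add_left (le_max_right _ _) _)
  · rw [max_eq_left h'] at h
    rw [dist_comm x₂ x₃] at h
    rw [chainDist_comm x₂ x₃]
    exact (cross x₁ x₂ x₃ x₄ h' h).trans (add_le_add_left (le_max_left _ _) _)

end Hyperbolic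

/-- Proposition 5.1 of Alvarez–Lafforgue. Let `(X, d)` be δ-hyperbolic, weakly
δ-geodesic and uniformly locally finite, with an isometric action of a group `G`.
Define `d' x y` as the least `k ∈ ℕ` admitting a chain `x = x₀, …, x_k = y` with
`d(x_j, x_{j+1}) ≤ δ + 1`. Then `d'` is a well-defined metric, quasi-isometric to `d`
(`d ≤ (δ+1)·d'` and `d' ≤ d + 1`), `ℕ`-valued, geodesic in the discrete sense,
uniformly locally finite, δ'-hyperbolic for some `δ' ≥ 0`, and `G` acts on `(X, d')`
by isometries: `(X, d')` is a good discrete hyperbolic space. -/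
theorem chain_metric_good_discrete_hyperbolic
    {X : Type*} [MetricSpace X] {G : Type*} [Group G] [MulAction G X]
    (δ : ℝ) (hδ : 0 ≤ δ)
    (hhyp : ∀ x₁ x₂ x₃ x₄ : X, dist x₁ x₄ + dist x₂ x₃ ≤
      max (dist x₁ x₂ + dist x₃ x₄) (dist x₁ x₃ + dist x₂ x₄) + δ)
    (hwgeo : ∀ x y : X, ∀ s : ℝ, 0 ≤ s → s ≤ dist x y + δ →
      ∃ z : X, dist x z ≤ s ∧ dist z y ≤ dist x y - s + δ)
    (hulf : ∀ r : ℝ, ∃ K : ℕ, ∀ x : X,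
      (Metric.closedBall x r).Finite ∧ Nat.card (Metric.closedBall x r) ≤ K)
    (hiso : ∀ (g : G) (x y : X), dist (g • x) (g • y) = dist x y) :
    ∃ d' : X → X → ℕ,
      -- `d' x y` is the least length of a chain from `x` to `y` with steps `≤ δ + 1`
      (∀ x y : X, IsLeast {k : ℕ | ∃ c : ℕ → X, c 0 = x ∧ c k = y ∧
        ∀ j < k, dist (c j) (c (j + 1)) ≤ δ + 1} (d' x y)) ∧
      -- `d'` is a metric
      (∀ x y : X, d' x y = 0 ↔ x = y) ∧
      (∀ x y : X, d' x y = d' y x) ∧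
      (∀ x y z : X, d' x z ≤ d' x y + d' y z) ∧
      -- quasi-isometry: `d ≤ (δ+1)·d'` and `d' ≤ d + 1`
      (∀ x y : X, dist x y ≤ (δ + 1) * (d' x y : ℝ)) ∧
      (∀ x y : X, (d' x y : ℝ) ≤ dist x y + 1) ∧
      -- `d'` is geodesic in the discrete sense
      (∀ x y : X, ∀ k : ℕ, k ≤ d' x y →
        ∃ z : X, d' x z = k ∧ d' z y = d' x y - k) ∧
      -- `(X, d')` is uniformly locally finite
      (∀ r : ℝ, ∃ K : ℕ, ∀ x : X, {y : X | (d' x y : ℝ) ≤ r}.Finite ∧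
        Nat.card {y : X | (d' x y : ℝ) ≤ r} ≤ K) ∧
      -- `(X, d')` is δ'-hyperbolic for some `δ' ≥ 0`
      (∃ δ' : ℝ, 0 ≤ δ' ∧ ∀ x₁ x₂ x₃ x₄ : X, (d' x₁ x₄ : ℝ) + (d' x₂ x₃ : ℝ) ≤
        max ((d' x₁ x₂ : ℝ) + (d' x₃ x₄ : ℝ)) ((d' x₁ x₃ : ℝ) + (d' x₂ x₄ : ℝ)) + δ') ∧
      -- `G` acts on `(X, d')` by isometries
      (∀ (g : G) (x y : X), d' (g • x) (g • y) = d' x y) := by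
  have hgeo : WeaklyGeodesic X δ := hwgeo
  refine ⟨chainDist δ, fun x y => ⟨chainDist_mem hδ hgeo x y, fun k hk => chainDist_le_of_mem hk⟩,
    chainDist_eq_zero_iff hδ hgeo, chainDist_comm, chainDist_triangle hδ hgeo,
    dist_le_mul_chainDist hδ hgeo, chainDist_le_dist_add_one hδ hgeo, ?_, ?_,
    exists_chainDist_hyperbolic hhyp hδ hgeo, ?_⟩
  · intro x y k hk
    obtain ⟨c, c0, cn, -, hc⟩ := exists_chainDist_geodesic hδ hgeo x y
    refine ⟨c k, ?_, ?_⟩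
    · simpa [c0] using hc 0 k k.zero_le hk
    · simpa [cn] using hc k _ hk le_rfl
  · intro r
    obtain ⟨K, hK⟩ := hulf ((δ + 1) * r)
    refine ⟨K, fun x => ?_⟩
    have hsub : {y : X | (chainDist δ x y : ℝ) ≤ r} ⊆ Metric.closedBall x ((δ + 1) * r) := by
      intro y hy
      rw [Metric.mem_closedBall, dist_comm]
      exact (dist_le_mul_chainDist hδ hgeo x y).trans
        (mul_le_mul_of_nonneg_left hy (by linarith))
    exact ⟨(hK x).1.subset hsub, (Nat.card_mono (hK x).1 hsub).trans (hK x).2⟩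
  · have hle : ∀ (g : G) (x y : X), chainDist δ (g • x) (g • y) ≤ chainDist δ x y := by
      intro g x y
      obtain ⟨c, c0, cn, hc⟩ := chainDist_mem hδ hgeo x y
      exact chainDist_le_of_mem ⟨fun j => g • c j, congrArg _ c0, congrArg _ cn,
        fun j hj => (hiso g _ _).trans_le (hc j hj)⟩
    intro g x y
    exact le_antisymm (hle g x y) (by simpa using hle g⁻¹ (g • x) (g • y))
end

section
/- Let (X,d) be a nonempty metric space which is δ-hyperbolic for some real δ ≥ 0, weakly δ₀-geodesic for some real δ₀ ≥ 0, and uniformly locally finite, equipped with a metrically proper isometric action of a group G. Then there exist R ∈ ℕ and a real p₀ ≥ 1 such that for every real p ≥ p₀ there exists a map b : G → ℓ^p(X^{≤R}) which is a cocycle for the permutation representation π (i.e., b(gh) = b(g) + π(g)(b(h)) for all g,h ∈ G) and which is proper (for every M ≥ 0 the set {g ∈ G : ‖b(g)‖_p ≤ M} is finite). -/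
open scoped NNReal

/-- Twice the Gromov product of `x` and `y` based at `a`. -/
def doubleGromov {X : Type*} [MetricSpace X] (a x y : X) : ℝ :=
  dist x a + dist y a - dist x y

open Classical in
/-- The exponential of minus the (scaled) Gromov product, set to zero on the diagonal. -/
noncomputable def visualPreDist {X : Type*} [MetricSpace X] (ε : ℝ) (a x y : X) : ℝ≥0 :=
  if x = y then 0 else Real.toNNReal (Real.exp (-(ε * doubleGromov a x y)))

section Visual

variable {X : Type*} [MetricSpace X]

theorem doubleGromov_comm (a x y : X) : doubleGromov a x y = doubleGromov a y x := by
  unfold doubleGromov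
  rw [dist_comm x y]
  ring

theorem visualPreDist_self (ε : ℝ) (a x : X) : visualPreDist ε a x x = 0 := by
  simp [visualPreDist]

theorem visualPreDist_comm (ε : ℝ) (a x y : X) :
    visualPreDist ε a x y = visualPreDist ε a y x := by
  unfold visualPreDist
  rw [doubleGromov_comm a x y]
  by_cases h : x = y
  · simp [h]
  · simp [h, Ne.symm h]

theorem coe_visualPreDist_of_ne (ε : ℝ) (a : X) {x y : X} (h : x ≠ y) :
    (visualPreDist ε a x y : ℝ) = Real.exp (-(ε * doubleGromov a x y)) := by
  simp [visualPreDist, h, Real.exp_nonneg]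

theorem coe_visualPreDist_le (ε : ℝ) (a x y : X) :
    (visualPreDist ε a x y : ℝ) ≤ Real.exp (-(ε * doubleGromov a x y)) := by
  by_cases h : x = y
  · subst h
    simp [visualPreDist_self, Real.exp_nonneg]
  · exact (coe_visualPreDist_of_ne ε a h).le

theorem visualPreDist_map_of_isometry (ε : ℝ) {φ : X → X} (hφ : Isometry φ) (a x y : X) :
    visualPreDist ε (φ a) (φ x) (φ y) = visualPreDist ε a x y := by
  simp only [visualPreDist, doubleGromov, hφ.dist_eq]
  by_cases h : x = y
  · simp [h]
  · simp [h, hφ.injective.ne h]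

/-- The visual pseudodistance at `a`: the largest pseudodistance below `visualPreDist`. -/
noncomputable def visualDist (ε : ℝ) (a x y : X) : ℝ :=
  (PseudoMetricSpace.ofPreNNDist (visualPreDist ε a) (visualPreDist_self ε a)
    (visualPreDist_comm ε a)).dist x y

theorem visualDist_le (ε : ℝ) (a x y : X) :
    visualDist ε a x y ≤ Real.exp (-(ε * doubleGromov a x y)) :=
  (PseudoMetricSpace.dist_ofPreNNDist_le _ (visualPreDist_self ε a)
    (visualPreDist_comm ε a) x y).trans (coe_visualPreDist_le ε a x y)

theorem abs_visualDist_sub_le (ε : ℝ) (a x y u : X) :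
    |visualDist ε a x u - visualDist ε a y u| ≤ Real.exp (-(ε * doubleGromov a x y)) :=
  (@abs_dist_sub_le X (PseudoMetricSpace.ofPreNNDist (visualPreDist ε a) (visualPreDist_self ε a)
    (visualPreDist_comm ε a)) x y u).trans (visualDist_le ε a x y)

theorem visualDist_map_le_of_isometry (ε : ℝ) {φ : X → X} (hφ : Isometry φ) (a x y : X) :
    visualDist ε (φ a) (φ x) (φ y) ≤ visualDist ε a x y := by
  refine NNReal.coe_le_coe.2 (le_ciInf fun l => ?_)
  refine (ciInf_le (OrderBot.bddBelow _) (l.map φ)).trans_eq ?_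
  have h : φ x :: l.map φ = (x :: l).map φ := rfl
  have h' : l.map φ ++ [φ y] = (l ++ [y]).map φ := by simp
  rw [h, h', List.zipWith_map]
  simp only [visualPreDist_map_of_isometry ε hφ]

theorem visualDist_smul {G : Type*} [Group G] [MulAction G X]
    (hiso : ∀ (g : G) (x y : X), dist (g • x) (g • y) = dist x y) (ε : ℝ) (g : G) (a x y : X) :
    visualDist ε (g • a) (g • x) (g • y) = visualDist ε a x y := by
  refine le_antisymm
    (visualDist_map_le_of_isometry ε (Isometry.of_dist_eq (hiso g)) a x y) ?_
  simpa using
    visualDist_map_le_of_isometry ε (Isometry.of_dist_eq (hiso g⁻¹)) (g • a) (g • x) (g • y)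

theorem visualPreDist_le_mul_max {δ ε : ℝ} (hδ : 0 ≤ δ) (hε : 0 ≤ ε)
    (hhyp : ∀ x₁ x₂ x₃ x₄ : X, dist x₁ x₄ + dist x₂ x₃ ≤
      max (dist x₁ x₂ + dist x₃ x₄) (dist x₁ x₃ + dist x₂ x₄) + δ) (a x y z : X) :
    visualPreDist ε a x z ≤
      Real.toNNReal (Real.exp (ε * δ)) * max (visualPreDist ε a x y) (visualPreDist ε a y z) := by
  have h1 : 1 ≤ Real.toNNReal (Real.exp (ε * δ)) := by
    rw [Real.one_le_toNNReal]
    exact Real.one_le_exp (by positivity)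
  by_cases hxz : x = z
  · simp [hxz, visualPreDist_self]
  by_cases hxy : x = y
  · subst hxy
    exact (le_max_right _ _).trans (le_mul_of_one_le_left' h1)
  by_cases hyz : y = z
  · subst hyz
    exact (le_max_left _ _).trans (le_mul_of_one_le_left' h1)
  rw [← NNReal.coe_le_coe]
  push_cast
  rw [coe_visualPreDist_of_ne ε a hxz, coe_visualPreDist_of_ne ε a hxy,
    coe_visualPreDist_of_ne ε a hyz, Real.coe_toNNReal _ (Real.exp_nonneg _),
    mul_max_of_nonneg _ _ (Real.exp_nonneg _), ← Real.exp_add, ← Real.exp_add, le_max_iff,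
    Real.exp_le_exp, Real.exp_le_exp]
  have h := hhyp x y a z
  unfold doubleGromov
  rw [← sub_le_iff_le_add, le_max_iff] at h
  rcases h with h | h
  · left
    rw [dist_comm a z] at h
    nlinarith [mul_le_mul_of_nonneg_left h hε]
  · right
    nlinarith [mul_le_mul_of_nonneg_left h hε]

theorem exp_le_two_mul_visualDist {δ ε : ℝ} (hδ : 0 ≤ δ) (hε : 0 ≤ ε)
    (hεδ : Real.exp (ε * δ) * Real.exp (ε * δ) ≤ 2)
    (hhyp : ∀ x₁ x₂ x₃ x₄ : X, dist x₁ x₄ + dist x₂ x₃ ≤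
      max (dist x₁ x₂ + dist x₃ x₄) (dist x₁ x₃ + dist x₂ x₄) + δ) (a : X) {x y : X}
    (hxy : x ≠ y) :
    Real.exp (-(ε * doubleGromov a x y)) ≤ 2 * visualDist ε a x y := by
  rw [← coe_visualPreDist_of_ne ε a hxy]
  refine PseudoMetricSpace.le_two_mul_dist_ofPreNNDist _ (visualPreDist_self ε a)
    (visualPreDist_comm ε a) (fun x₁ x₂ x₃ x₄ => ?_) x y
  set c := Real.toNNReal (Real.exp (ε * δ)) with hc
  have h1 : 1 ≤ c := by
    rw [hc, Real.one_le_toNNReal]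
    exact Real.one_le_exp (by positivity)
  have h2 : c * c ≤ 2 := by
    rw [← NNReal.coe_le_coe]
    simpa [hc, Real.exp_nonneg] using hεδ
  have h124 := visualPreDist_le_mul_max hδ hε hhyp a x₁ x₂ x₄
  have h234 := visualPreDist_le_mul_max hδ hε hhyp a x₂ x₃ x₄
  rw [← hc] at h124 h234
  calc visualPreDist ε a x₁ x₄
      ≤ c * max (visualPreDist ε a x₁ x₂) (visualPreDist ε a x₂ x₄) := h124
    _ ≤ c * max (c * visualPreDist ε a x₁ x₂)
          (c * max (visualPreDist ε a x₂ x₃) (visualPreDist ε a x₃ x₄)) := by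
        gcongr
        exact le_mul_of_one_le_left' h1
    _ = c * c * max (visualPreDist ε a x₁ x₂)
          (max (visualPreDist ε a x₂ x₃) (visualPreDist ε a x₃ x₄)) := by
        rw [← mul_max, mul_assoc]
    _ ≤ _ := by gcongr

end Visual

/-- If the fibres of `ν` grow at most like `A * K ^ n`, then `r ^ ν` is summable for `K * r < 1`. -/
theorem summable_pow_of_card_fiber_le {ι : Type*} (ν : ι → ℕ) (A K : ℕ) {r : ℝ} (hr : 0 ≤ r)
    (hKr : K * r < 1)
    (hcard : ∀ (S : Finset ι) (n : ℕ), (∀ i ∈ S, ν i = n) → S.card ≤ A * K ^ n) :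
    Summable fun i => r ^ ν i := by
  classical
  have hgeo : Summable fun n : ℕ => (A : ℝ) * (K * r) ^ n :=
    (summable_geometric_of_lt_one (by positivity) hKr).mul_left _
  refine summable_of_sum_le (c := ∑' n : ℕ, (A : ℝ) * (K * r) ^ n)
    (fun i => by positivity) fun S => ?_
  rw [← Finset.sum_fiberwise_of_maps_to (t := S.image ν) (g := ν)
    (fun i hi => Finset.mem_image_of_mem ν hi)]
  refine le_trans (Finset.sum_le_sum fun n _ => ?_)
    (hgeo.sum_le_tsum (S.image ν) fun n _ => by positivity)
  have hconst : ∑ i ∈ S with ν i = n, r ^ ν i = ((S.filter (ν · = n)).card : ℝ) * r ^ n := by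
    rw [← nsmul_eq_mul, ← Finset.sum_const]
    exact Finset.sum_congr rfl fun i hi => by rw [(Finset.mem_filter.1 hi).2]
  rw [hconst, mul_pow, ← mul_assoc]
  gcongr
  exact_mod_cast hcard _ n fun i hi => (Finset.mem_filter.1 hi).2

section Growth

variable {X : Type*} [MetricSpace X]

theorem ncard_closedBall_le_pow {δ₀ : ℝ} (hδ₀ : 0 ≤ δ₀)
    (hwgeo : ∀ x y : X, ∀ s : ℝ, 0 ≤ s → s ≤ dist x y + δ₀ →
      ∃ z : X, dist x z ≤ s ∧ dist z y ≤ dist x y - s + δ₀)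
    (hfin : ∀ (x : X) (r : ℝ), (Metric.closedBall x r).Finite) {K : ℕ}
    (hK : ∀ x : X, (Metric.closedBall x (1 + δ₀)).ncard ≤ K) (o : X) (n : ℕ) :
    (Metric.closedBall o n).ncard ≤ K ^ n := by
  classical
  induction n with
  | zero => simp
  | succ n ih =>
    have hsub : Metric.closedBall o ((n + 1 : ℕ) : ℝ) ⊆
        ((hfin o n).toFinset.biUnion fun z => (hfin z (1 + δ₀)).toFinset : Finset X) := by
      intro y hy
      simp only [Finset.coe_biUnion, Set.Finite.coe_toFinset, Set.mem_iUnion, exists_prop]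
      rw [Metric.mem_closedBall, dist_comm] at hy
      push_cast at hy
      rcases le_total (dist o y) n with h | h
      · refine ⟨y, by rwa [Metric.mem_closedBall, dist_comm], ?_⟩
        simp only [Metric.mem_closedBall, dist_self]
        positivity
      · obtain ⟨z, hz, hz'⟩ := hwgeo o y n (by positivity) (by linarith)
        refine ⟨z, by rwa [Metric.mem_closedBall, dist_comm], ?_⟩
        rw [Metric.mem_closedBall, dist_comm]
        linarith
    refine (Set.ncard_le_ncard hsub (Finset.finite_toSet _)).trans ?_
    rw [Set.ncard_coe_finset, pow_succ]
    refine (Finset.card_biUnion_le_card_mul _ _ K fun z _ => ?_).trans ?_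
    · rw [← Set.ncard_eq_toFinset_card _ (hfin z (1 + δ₀))]
      exact hK z
    · rw [← Set.ncard_eq_toFinset_card _ (hfin o n)]
      gcongr

theorem card_boundedPairs_le {R : ℝ} {A B : ℕ}
    (hfin : ∀ (x : X) (r : ℝ), (Metric.closedBall x r).Finite)
    (hA : ∀ x : X, (Metric.closedBall x R).ncard ≤ A) (o : X) {r : ℝ}
    (hB : (Metric.closedBall o r).ncard ≤ B)
    (S : Finset {q : X × X // dist q.1 q.2 ≤ R}) (hS : ∀ q ∈ S, dist q.1.1 o ≤ r) :
    S.card ≤ A * B := by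
  classical
  refine (Finset.card_le_mul_card_image_of_maps_to (f := fun q => q.1.1)
    (t := (hfin o r).toFinset) (fun q hq => by simpa using hS q hq) A fun a _ => ?_).trans ?_
  · refine le_trans ?_ (hA a)
    rw [Set.ncard_eq_toFinset_card _ (hfin a R)]
    refine Finset.card_le_card_of_injOn (fun q => q.1.2) ?_ ?_
    · rintro ⟨⟨x, y⟩, hq⟩ hm
      simp only [Finset.coe_filter, Set.mem_ofPred_eq] at hm
      obtain ⟨-, rfl⟩ := hm
      simpa [dist_comm] using hq
    · rintro ⟨⟨x, y⟩, hq⟩ hm ⟨⟨x', y'⟩, hq'⟩ hm' h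
      simp only [Finset.coe_filter, Set.mem_ofPred_eq] at hm hm' h
      obtain ⟨-, rfl⟩ := hm
      obtain ⟨-, rfl⟩ := hm'
      subst h
      rfl
  · rw [← Set.ncard_eq_toFinset_card _ (hfin o r)]
    gcongr

/-- A sufficiently fast exponential decay is summable over pairs at distance at most `R`. -/
theorem summable_exp_neg_dist_boundedPairs {δ₀ : ℝ} (hδ₀ : 0 ≤ δ₀)
    (hwgeo : ∀ x y : X, ∀ s : ℝ, 0 ≤ s → s ≤ dist x y + δ₀ →
      ∃ z : X, dist x z ≤ s ∧ dist z y ≤ dist x y - s + δ₀)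
    (hfin : ∀ (x : X) (r : ℝ), (Metric.closedBall x r).Finite) {K A : ℕ} {R t : ℝ}
    (hK : ∀ x : X, (Metric.closedBall x (1 + δ₀)).ncard ≤ K)
    (hA : ∀ x : X, (Metric.closedBall x R).ncard ≤ A) (ht : 0 ≤ t)
    (hKt : K * Real.exp (-t) < 1) (o : X) :
    Summable fun q : {q : X × X // dist q.1 q.2 ≤ R} => Real.exp (-(t * dist q.1.1 o)) := by
  have hs := summable_pow_of_card_fiber_le
    (fun q : {q : X × X // dist q.1 q.2 ≤ R} => ⌊dist q.1.1 o⌋₊) (A * K) K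
    (Real.exp_nonneg (-t)) hKt fun S n hS => by
      rw [mul_assoc, ← pow_succ']
      refine card_boundedPairs_le hfin hA o
        (ncard_closedBall_le_pow hδ₀ hwgeo hfin hK o (n + 1)) S fun q hq => ?_
      rw [← hS q hq]
      push_cast
      exact (Nat.lt_floor_add_one _).le
  refine Summable.of_nonneg_of_le (fun q => Real.exp_nonneg _) (fun q => ?_) hs
  rw [← Real.exp_nat_mul, Real.exp_le_exp]
  nlinarith [mul_le_mul_of_nonneg_left
    (Nat.floor_le (dist_nonneg : 0 ≤ dist q.1.1 o)) ht]

end Growth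

section Separation

variable {X : Type*} [MetricSpace X]

/-- A point `a` roughly at distance `s` from `x` on the way to `y`, together with a nearby point `u`
towards `x`, is separated by the visual distances of `x` and `y`. -/
theorem exists_boundedPair_visualDist_sub {δ δ₀ ε R : ℝ} (hδ : 0 ≤ δ) (hε : 0 ≤ ε)
    (hεδ : Real.exp (ε * δ) * Real.exp (ε * δ) ≤ 2)
    (hhyp : ∀ x₁ x₂ x₃ x₄ : X, dist x₁ x₄ + dist x₂ x₃ ≤
      max (dist x₁ x₂ + dist x₃ x₄) (dist x₁ x₃ + dist x₂ x₄) + δ) (hδ₀ : 0 ≤ δ₀)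
    (hwgeo : ∀ x y : X, ∀ s : ℝ, 0 ≤ s → s ≤ dist x y + δ₀ →
      ∃ z : X, dist x z ≤ s ∧ dist z y ≤ dist x y - s + δ₀)
    (hR : δ₀ < R)
    (hεR : 4 * Real.exp (-(ε * (2 * (R - δ₀)))) ≤ Real.exp (-(ε * (2 * δ₀)))) (x y : X) {s : ℝ}
    (hRs : R ≤ s) (hs : s ≤ dist x y) :
    ∃ q : {q : X × X // dist q.1 q.2 ≤ R}, dist x q.1.1 ≤ s ∧ s - δ₀ ≤ dist x q.1.1 ∧
      Real.exp (-(ε * (2 * δ₀))) / 4 ≤ visualDist ε q.1.1 y q.1.2 - visualDist ε q.1.1 x q.1.2 := by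
  obtain ⟨a, hxa, hay⟩ := hwgeo x y s (by linarith) (by linarith)
  have hsa : s - δ₀ ≤ dist x a := by linarith [dist_triangle x a y]
  obtain ⟨u, hau, hux⟩ := hwgeo a x R (by linarith) (by rw [dist_comm a x]; linarith)
  refine ⟨⟨(a, u), hau⟩, hxa, hsa, ?_⟩
  have hyu : dist x y - s + R - δ₀ ≤ dist y u := by
    linarith [dist_triangle x u y, dist_comm u x, dist_comm u y, dist_comm a x]
  have hne : y ≠ u := by
    rintro rfl
    rw [dist_self] at hyu
    linarith
  have hnear : visualDist ε a x u ≤ Real.exp (-(ε * (2 * (R - δ₀)))) := by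
    refine (visualDist_le ε a x u).trans (Real.exp_le_exp.2 (neg_le_neg ?_))
    refine mul_le_mul_of_nonneg_left ?_ hε
    unfold doubleGromov
    linarith [dist_triangle a u x, dist_comm u x, dist_comm a x, dist_comm u a]
  have hfar : Real.exp (-(ε * (2 * δ₀))) ≤ 2 * visualDist ε a y u := by
    refine le_trans (Real.exp_le_exp.2 (neg_le_neg ?_))
      (exp_le_two_mul_visualDist hδ hε hεδ hhyp a hne)
    refine mul_le_mul_of_nonneg_left ?_ hε
    unfold doubleGromov
    linarith [dist_comm y a, dist_comm u a]
  change _ ≤ visualDist ε a y u - visualDist ε a x u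
  linarith

/-- Many separated pairs along a long quasi-geodesic. -/
theorem exists_finset_boundedPairs_visualDist_sub {δ δ₀ ε R : ℝ} (hδ : 0 ≤ δ) (hε : 0 ≤ ε)
    (hεδ : Real.exp (ε * δ) * Real.exp (ε * δ) ≤ 2)
    (hhyp : ∀ x₁ x₂ x₃ x₄ : X, dist x₁ x₄ + dist x₂ x₃ ≤
      max (dist x₁ x₂ + dist x₃ x₄) (dist x₁ x₃ + dist x₂ x₄) + δ) (hδ₀ : 0 ≤ δ₀)
    (hwgeo : ∀ x y : X, ∀ s : ℝ, 0 ≤ s → s ≤ dist x y + δ₀ →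
      ∃ z : X, dist x z ≤ s ∧ dist z y ≤ dist x y - s + δ₀)
    (hR : δ₀ < R)
    (hεR : 4 * Real.exp (-(ε * (2 * (R - δ₀)))) ≤ Real.exp (-(ε * (2 * δ₀)))) (x y : X) (N : ℕ)
    (hN : R + N * (δ₀ + 1) ≤ dist x y) :
    ∃ S : Finset {q : X × X // dist q.1 q.2 ≤ R}, S.card = N ∧ ∀ q ∈ S,
      Real.exp (-(ε * (2 * δ₀))) / 4 ≤ visualDist ε q.1.1 y q.1.2 - visualDist ε q.1.1 x q.1.2 := by
  classical
  have hex : ∀ k : Fin N, ∃ q : {q : X × X // dist q.1 q.2 ≤ R},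
      dist x q.1.1 ≤ R + k * (δ₀ + 1) ∧ R + k * (δ₀ + 1) - δ₀ ≤ dist x q.1.1 ∧
      Real.exp (-(ε * (2 * δ₀))) / 4 ≤
        visualDist ε q.1.1 y q.1.2 - visualDist ε q.1.1 x q.1.2 := fun k => by
    refine exists_boundedPair_visualDist_sub hδ hε hεδ hhyp hδ₀ hwgeo hR hεR x y ?_ ?_
    · have : (0 : ℝ) ≤ k * (δ₀ + 1) := by positivity
      linarith
    · refine le_trans ?_ hN
      gcongr
      exact k.2.le
  choose q hq hq' hsep using hex
  have hlt : ∀ j k : Fin N, j < k → dist x (q j).1.1 < dist x (q k).1.1 := fun j k hjk => by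
    have hjk' : (j : ℝ) + 1 ≤ k := by exact_mod_cast hjk
    nlinarith [hq j, hq' k, mul_le_mul_of_nonneg_right hjk' (by linarith : 0 ≤ δ₀ + 1)]
  have hinj : Function.Injective q := fun j k h => by
    rcases lt_trichotomy j k with hjk | hjk | hjk
    · exact absurd (hlt j k hjk) (by rw [h]; exact lt_irrefl _)
    · exact hjk
    · exact absurd (hlt k j hjk) (by rw [h]; exact lt_irrefl _)
  refine ⟨Finset.univ.image q, ?_, fun p hp => ?_⟩
  · rw [Finset.card_image_of_injective _ hinj, Finset.card_univ, Fintype.card_fin]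
  · obtain ⟨k, -, rfl⟩ := Finset.mem_image.1 hp
    exact hsep k

end Separation

/-- Corollary 5.3 of Alvarez–Lafforgue (Yu). A group `G` acting isometrically and
metrically properly on a nonempty δ-hyperbolic, weakly δ₀-geodesic, uniformly locally
finite metric space `(X, d)` admits, for some `R : ℕ` and all sufficiently large real
`p`, a proper cocycle `b : G → ℓ^p(X^{≤R})` for the permutation representation. -/
theorem exists_proper_lp_cocycle_hyperbolic
    {X : Type*} [MetricSpace X] [Nonempty X] {G : Type*} [Group G] [MulAction G X]
    (δ : ℝ) (hδ : 0 ≤ δ)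
    (hhyp : ∀ x₁ x₂ x₃ x₄ : X, dist x₁ x₄ + dist x₂ x₃ ≤
      max (dist x₁ x₂ + dist x₃ x₄) (dist x₁ x₃ + dist x₂ x₄) + δ)
    (δ₀ : ℝ) (hδ₀ : 0 ≤ δ₀)
    (hwgeo : ∀ x y : X, ∀ s : ℝ, 0 ≤ s → s ≤ dist x y + δ₀ →
      ∃ z : X, dist x z ≤ s ∧ dist z y ≤ dist x y - s + δ₀)
    (hulf : ∀ r : ℝ, ∃ K : ℕ, ∀ x : X,
      (Metric.closedBall x r).Finite ∧ Nat.card (Metric.closedBall x r) ≤ K)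
    (hiso : ∀ (g : G) (x y : X), dist (g • x) (g • y) = dist x y)
    (hproper : ∀ (o : X) (M : ℝ), {g : G | dist o (g • o) ≤ M}.Finite) :
    ∃ R : ℕ, ∃ p₀ : ℝ, 1 ≤ p₀ ∧ ∀ p : ℝ, p₀ ≤ p →
      ∃ b : G → lp (fun _ : {q : X × X // dist q.1 q.2 ≤ (R : ℝ)} => ℝ)
          (ENNReal.ofReal p),
        -- cocycle identity `b (g h) = b g + π g (b h)` where `(π g f) (x, y) = f (g⁻¹ x, g⁻¹ y)`
        (∀ g h : G, ∀ q : {q : X × X // dist q.1 q.2 ≤ (R : ℝ)},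
          (b (g * h) : _ → ℝ) q = (b g : _ → ℝ) q +
            (b h : _ → ℝ) ⟨(g⁻¹ • q.val.1, g⁻¹ • q.val.2), by
              rw [hiso]; exact q.property⟩) ∧
        -- properness of the cocycle
        (∀ M : ℝ, 0 ≤ M → {g : G | ‖b g‖ ≤ M}.Finite) := by
  obtain ⟨o⟩ := ‹Nonempty X›
  have hfin : ∀ (x : X) (r : ℝ), (Metric.closedBall x r).Finite := fun x r =>
    let ⟨_, h⟩ := hulf r
    (h x).1
  set ε : ℝ := Real.log 2 / (2 * (δ + 1)) with hεdef
  have hlog : 0 < Real.log 2 := Real.log_pos one_lt_two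
  have hε : 0 < ε := by positivity
  have hεδ : Real.exp (ε * δ) * Real.exp (ε * δ) ≤ 2 := by
    rw [← Real.exp_add, ← Real.le_log_iff_exp_le two_pos]
    have h : ε * (2 * (δ + 1)) = Real.log 2 := by rw [hεdef]; field_simp
    nlinarith
  obtain ⟨R, hRbig⟩ := exists_nat_ge (2 * δ₀ + 1 + Real.log 4 / (2 * ε))
  have hlog4 : 0 < Real.log 4 := Real.log_pos (by norm_num)
  have hquot : 0 < Real.log 4 / (2 * ε) := by positivity
  have hR : δ₀ < R := by linarith
  have hεR : 4 * Real.exp (-(ε * (2 * (R - δ₀)))) ≤ Real.exp (-(ε * (2 * δ₀))) := by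
    have h4 : (4 : ℝ) = Real.exp (Real.log 4) := (Real.exp_log (by norm_num)).symm
    rw [h4, ← Real.exp_add, Real.exp_le_exp]
    have h : Real.log 4 ≤ (R - 2 * δ₀) * (2 * ε) := by
      rw [← div_le_iff₀ (by positivity)]
      linarith
    linarith
  obtain ⟨A, hA⟩ := hulf R
  obtain ⟨K', hK'⟩ := hulf (1 + δ₀)
  set K := K' + 1
  have hK : ∀ x : X, (Metric.closedBall x (1 + δ₀)).ncard ≤ K := fun x =>
    (hK' x).2.trans (Nat.le_succ K')
  refine ⟨R, max 1 (Real.log K / (2 * ε) + 1), le_max_left _ _, fun p hp => ?_⟩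
  have hp1 : 1 ≤ p := (le_max_left _ _).trans hp
  have hp0 : 0 < p := by linarith
  have htoReal : (ENNReal.ofReal p).toReal = p := ENNReal.toReal_ofReal hp0.le
  have hKp : K * Real.exp (-(2 * ε * p)) < 1 := by
    have hKpos : (0 : ℝ) < K := by positivity
    have h : Real.log K / (2 * ε) < p := by linarith [(le_max_right _ _).trans hp]
    rw [div_lt_iff₀ (by positivity)] at h
    rw [← Real.exp_log hKpos, ← Real.exp_add, Real.exp_lt_one_iff]
    linarith
  have hsum := summable_exp_neg_dist_boundedPairs (R := R) hδ₀ hwgeo hfin hK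
    (fun x => (hA x).2) (by positivity) hKp o
  have hmem : ∀ g : G, Memℓp (E := fun _ : {q : X × X // dist q.1 q.2 ≤ (R : ℝ)} => ℝ)
      (fun q => visualDist ε q.1.1 (g • o) q.1.2 - visualDist ε q.1.1 o q.1.2)
      (ENNReal.ofReal p) := fun g => by
    refine memℓp_gen ?_
    rw [htoReal]
    refine Summable.of_nonneg_of_le (fun q => by positivity) (fun q => ?_)
      (hsum.mul_left (Real.exp (2 * ε * p * dist (g • o) o)))
    refine (Real.rpow_le_rpow (norm_nonneg _)
      (abs_visualDist_sub_le ε q.1.1 (g • o) o q.1.2) hp0.le).trans ?_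
    rw [← Real.exp_mul, ← Real.exp_add, Real.exp_le_exp]
    have h : 2 * dist q.1.1 o - 2 * dist (g • o) o ≤ doubleGromov q.1.1 (g • o) o := by
      unfold doubleGromov
      linarith [dist_triangle_left q.1.1 o (g • o), dist_comm o q.1.1]
    nlinarith [mul_le_mul_of_nonneg_left h (by positivity : 0 ≤ ε * p)]
  refine ⟨fun g => ⟨_, hmem g⟩, fun g h q => ?_, fun M _ => ?_⟩
  · have hinv : ∀ x : X, visualDist ε (g⁻¹ • q.1.1) x (g⁻¹ • q.1.2) =
        visualDist ε q.1.1 (g • x) q.1.2 := fun x => by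
      simpa using visualDist_smul hiso ε g⁻¹ q.1.1 (g • x) q.1.2
    change visualDist ε q.1.1 ((g * h) • o) q.1.2 - visualDist ε q.1.1 o q.1.2 =
      (visualDist ε q.1.1 (g • o) q.1.2 - visualDist ε q.1.1 o q.1.2) +
      (visualDist ε (g⁻¹ • q.1.1) (h • o) (g⁻¹ • q.1.2) -
        visualDist ε (g⁻¹ • q.1.1) o (g⁻¹ • q.1.2))
    rw [hinv, hinv, mul_smul]
    ring
  · set c : ℝ := Real.exp (-(ε * (2 * δ₀))) / 4
    have hcpos : 0 < c := by positivity
    obtain ⟨N, hN⟩ := exists_nat_gt (M ^ p / c ^ p)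
    rw [div_lt_iff₀ (by positivity)] at hN
    refine (hproper o (R + N * (δ₀ + 1))).subset fun g hg => ?_
    simp only [Set.mem_ofPred_eq] at hg ⊢
    by_contra! hlt
    obtain ⟨S, hScard, hS⟩ := exists_finset_boundedPairs_visualDist_sub hδ hε.le hεδ hhyp hδ₀
      hwgeo hR hεR o (g • o) N hlt.le
    have hle := lp.sum_rpow_le_norm_rpow (by rw [htoReal]; exact hp0)
      (⟨_, hmem g⟩ : lp (fun _ : {q : X × X // dist q.1 q.2 ≤ (R : ℝ)} => ℝ)
        (ENNReal.ofReal p)) S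
    rw [htoReal] at hle
    have hlower := Finset.card_nsmul_le_sum S
      (fun q => ‖visualDist ε q.1.1 (g • o) q.1.2 - visualDist ε q.1.1 o q.1.2‖ ^ p) (c ^ p)
      fun q hq => Real.rpow_le_rpow hcpos.le ((hS q hq).trans (le_abs_self _)) hp0.le
    rw [hScard, nsmul_eq_mul] at hlower
    exact absurd ((hlower.trans hle).trans
      (Real.rpow_le_rpow (lp.norm_nonneg' _) hg hp0.le)) hN.not_ge
end

section
/- Let T be a tree with vertex set V and graph metric d, and let o, o' ∈ V with o ≠ o'. Then the set of pairs (a,b) ∈ V × V such that exactly one of the two conditions 'b is the o-directed neighbor of a' and 'b is the o'-directed neighbor of a' holds is finite, of cardinality 2·(d(o,o') + 1). Consequently, for every real p ≥ 1, the function c on V × V given by c(a,b) = 1_{b is the o-directed neighbor of a} − 1_{b is the o'-directed neighbor of a} satisfies ∑_{(a,b)} |c(a,b)|^p = 2·(d(o,o') + 1). -/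
/-- `b` is the `x`-directed neighbor of `a` in the graph `T`: either `a = x` and
`b = a`, or `b` is adjacent to `a` and one step closer to `x`. -/
def SimpleGraph.DirNbr {V : Type*} (T : SimpleGraph V) (x a b : V) : Prop :=
  (a = x ∧ b = a) ∨ (T.Adj a b ∧ T.dist x b + 1 = T.dist x a)

open Classical in
/-- The difference of the indicator functions of the `o`-directed and `o'`-directed
neighbor relations, as a function on pairs of vertices (this is the cocycle value
`c(a, b) = μ_o(a)({b}) - μ_{o'}(a)({b})` of Section 2 of Alvarez–Lafforgue). -/
noncomputable def dirDiff {V : Type*} (T : SimpleGraph V) (o o' : V) (q : V × V) : ℝ :=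
  (if T.DirNbr o q.1 q.2 then 1 else 0) - (if T.DirNbr o' q.1 q.2 then 1 else 0)

namespace SimpleGraph

variable {V : Type*} {T : SimpleGraph V}

lemma Connected.exists_dirNbr (hT : T.Connected) (x a : V) : ∃ b, T.DirNbr x a b := by
  obtain ⟨w, hw⟩ := hT.exists_walk_length_eq_dist a x
  cases w with
  | nil => exact ⟨x, .inl ⟨rfl, rfl⟩⟩
  | @cons _ b _ hab q =>
    refine ⟨b, .inr ⟨hab, ?_⟩⟩
    have hle := dist_le q
    have htri := hT.dist_triangle (u := a) (v := b) (w := x)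
    have hone := dist_eq_one_iff_adj.mpr hab
    rw [Walk.length_cons] at hw
    rw [dist_comm (u := x) (v := b), dist_comm (u := x) (v := a)]
    omega

lemma IsTree.eq_of_adj_of_dist_add_one (hT : T.IsTree) {x a b b' : V}
    (hb : T.Adj a b) (hd : T.dist x b + 1 = T.dist x a)
    (hb' : T.Adj a b') (hd' : T.dist x b' + 1 = T.dist x a) : b = b' := by
  obtain ⟨w, hw⟩ := hT.connected.exists_walk_length_eq_dist b x
  obtain ⟨w', hw'⟩ := hT.connected.exists_walk_length_eq_dist b' x
  have hp : (Walk.cons hb w).IsPath := Walk.isPath_of_length_eq_dist _ (by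
    rw [Walk.length_cons, hw, dist_comm, hd, dist_comm])
  have hp' : (Walk.cons hb' w').IsPath := Walk.isPath_of_length_eq_dist _ (by
    rw [Walk.length_cons, hw', dist_comm, hd', dist_comm])
  have heq := (hT.existsUnique_path a x).unique hp hp'
  simpa using congrArg Walk.snd heq

lemma dirNbr_self_iff {x b : V} : T.DirNbr x x b ↔ b = x := by
  simp [DirNbr]

lemma dirNbr_iff_of_ne {x a b : V} (h : a ≠ x) :
    T.DirNbr x a b ↔ T.Adj a b ∧ T.dist x b + 1 = T.dist x a := by
  simp [DirNbr, h]

lemma DirNbr.eq (hT : T.IsTree) {x a b c : V} (hb : T.DirNbr x a b) (hc : T.DirNbr x a c) :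
    b = c := by
  by_cases hax : a = x
  · subst hax
    rw [dirNbr_self_iff] at hb hc
    rw [hb, hc]
  · rw [dirNbr_iff_of_ne hax] at hb hc
    exact hT.eq_of_adj_of_dist_add_one hb.1 hb.2 hc.1 hc.2

/-- Moving the base point along an edge away from `a` does not change the directed neighbor. -/
lemma DirNbr.of_adj_of_dist_eq (hT : T.IsTree) {x y a b : V} (hxy : T.Adj x y) (hax : a ≠ x)
    (hay : a ≠ y) (hd : T.dist a y = T.dist a x + 1) (h : T.DirNbr x a b) : T.DirNbr y a b := by
  rw [dirNbr_iff_of_ne hax] at h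
  rw [dirNbr_iff_of_ne hay]
  refine ⟨h.1, ?_⟩
  have hyx := dist_eq_one_iff_adj.mpr hxy.symm
  have hab := dist_eq_one_iff_adj.mpr h.1.symm
  have hupper := hT.connected.dist_triangle (u := y) (v := x) (w := b)
  have hlower := hT.connected.dist_triangle (u := y) (v := b) (w := a)
  have hcomm := T.dist_comm (u := a) (v := x)
  have hcomm' := T.dist_comm (u := a) (v := y)
  omega

lemma DirNbr.of_adj (hT : T.IsTree) {x y a b : V} (hxy : T.Adj x y) (hax : a ≠ x)
    (hay : a ≠ y) (h : T.DirNbr x a b) : T.DirNbr y a b := by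
  rcases hT.dist_eq_dist_add_one_of_adj a hxy with hd | hd
  · obtain ⟨c, hc⟩ := hT.connected.exists_dirNbr y a
    rwa [h.eq hT (hc.of_adj_of_dist_eq hT hxy.symm hay hax hd)]
  · exact h.of_adj_of_dist_eq hT hxy hax hay hd

/-- Directed neighbors of a vertex agree for two base points joined by a walk avoiding it. -/
lemma DirNbr.of_notMem_support (hT : T.IsTree) {x y a b : V} (w : T.Walk x y)
    (ha : a ∉ w.support) (h : T.DirNbr x a b) : T.DirNbr y a b := by
  induction w with
  | nil => exact h
  | cons hadj w ih =>
    rw [Walk.support_cons, List.mem_cons, not_or] at ha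
    refine ih ha.2 (h.of_adj hT hadj ha.1 ?_)
    rintro rfl
    exact ha.2 w.start_mem_support

/-- Directed neighbors towards the two ends of a nontrivial geodesic through `a` differ. -/
lemma DirNbr.ne_of_mem_geodesic (hT : T.IsTree) {x y a b c : V} (hxy : x ≠ y) (w : T.Walk x y)
    (hw : w.length = T.dist x y) (ha : a ∈ w.support) (hb : T.DirNbr x a b)
    (hc : T.DirNbr y a c) : b ≠ c := by
  classical
  rintro rfl
  by_cases hax : a = x
  · subst hax
    rw [dirNbr_self_iff] at hb
    rw [dirNbr_iff_of_ne hxy, hb] at hc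
    exact T.irrefl hc.1
  by_cases hay : a = y
  · subst hay
    rw [dirNbr_self_iff] at hc
    rw [dirNbr_iff_of_ne hax, hc] at hb
    exact T.irrefl hb.1
  rw [dirNbr_iff_of_ne hax] at hb
  rw [dirNbr_iff_of_ne hay] at hc
  have hlen := congrArg Walk.length (w.take_spec ha)
  rw [Walk.length_append] at hlen
  have hleft := dist_le (w.takeUntil a ha)
  have hright := dist_le (w.dropUntil a ha)
  have htri := hT.connected.dist_triangle (u := x) (v := b) (w := y)
  have hcomm := T.dist_comm (u := a) (v := y)
  have hcomm' := T.dist_comm (u := b) (v := y)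
  omega

/-- The pairs on which two directed neighbor relations disagree form a finite set, with two
pairs for each vertex of the geodesic joining the base points. -/
lemma IsTree.exists_finset_xor_dirNbr (hT : T.IsTree) {o o' : V} (ho : o ≠ o') :
    ∃ F : Finset (V × V),
      (∀ q, q ∈ F ↔ Xor' (T.DirNbr o q.1 q.2) (T.DirNbr o' q.1 q.2)) ∧
      F.card = 2 * (T.dist o o' + 1) := by
  classical
  obtain ⟨w, hw⟩ := hT.connected.exists_walk_length_eq_dist o o'
  have hpath := w.isPath_of_length_eq_dist hw
  choose f hf using hT.connected.exists_dirNbr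
  have hiff (x a b : V) : T.DirNbr x a b ↔ f x a = b :=
    ⟨(hf x a).eq hT, fun h => h ▸ hf x a⟩
  have hmem (a : V) : a ∈ w.support ↔ f o a ≠ f o' a := by
    refine ⟨fun ha => DirNbr.ne_of_mem_geodesic hT ho w hw ha (hf o a) (hf o' a), fun hne => ?_⟩
    by_contra ha
    exact hne (((hf o a).of_notMem_support hT w ha).eq hT (hf o' a))
  have hinj (x : V) : Function.Injective fun a => (a, f x a) :=
    fun _ _ h => congrArg Prod.fst h
  let S := w.support.toFinset
  refine ⟨S.image (fun a => (a, f o a)) ∪ S.image (fun a => (a, f o' a)), ?_, ?_⟩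
  · rintro ⟨a, b⟩
    simp only [Finset.mem_union, Finset.mem_image, S, List.mem_toFinset, Prod.mk.injEq, hmem,
      hiff, Xor']
    grind
  · rw [Finset.card_union_of_disjoint, Finset.card_image_of_injective _ (hinj o),
      Finset.card_image_of_injective _ (hinj o'),
      List.toFinset_card_of_nodup hpath.support_nodup, Walk.length_support, hw, two_mul]
    rw [Finset.disjoint_left]
    simp only [Finset.mem_image, S, List.mem_toFinset, hmem]
    grind

end SimpleGraph

open Classical in
lemma abs_dirDiff_rpow {V : Type*} (T : SimpleGraph V) (o o' : V) (q : V × V) {p : ℝ}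
    (hp : p ≠ 0) :
    |dirDiff T o o' q| ^ p =
      if Xor' (T.DirNbr o q.1 q.2) (T.DirNbr o' q.1 q.2) then 1 else 0 := by
  unfold dirDiff Xor'
  by_cases h : T.DirNbr o q.1 q.2 <;> by_cases h' : T.DirNbr o' q.1 q.2 <;>
    simp [h, h', Real.zero_rpow hp]

/-- Section 2 of Alvarez–Lafforgue: on a tree, for `o ≠ o'`, the set of pairs `(a, b)`
on which the `o`-directed and `o'`-directed neighbor relations disagree is finite of
cardinality `2 (d(o, o') + 1)`; consequently, for every `p ≥ 1`,
`∑ |c(a,b)|^p = 2 (d(o, o') + 1)`. -/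
theorem dirDiff_lp_norm
    {V : Type*} (T : SimpleGraph V) (hT : T.IsTree) (o o' : V) (ho : o ≠ o') :
    {q : V × V | Xor' (T.DirNbr o q.1 q.2) (T.DirNbr o' q.1 q.2)}.Finite ∧
    Nat.card {q : V × V | Xor' (T.DirNbr o q.1 q.2) (T.DirNbr o' q.1 q.2)} =
      2 * (T.dist o o' + 1) ∧
    ∀ p : ℝ, 1 ≤ p →
      ∑ᶠ q : V × V, |dirDiff T o o' q| ^ p = 2 * ((T.dist o o' : ℝ) + 1) := by
  classical
  obtain ⟨F, hF, hcard⟩ := hT.exists_finset_xor_dirNbr ho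
  have hset : {q : V × V | Xor' (T.DirNbr o q.1 q.2) (T.DirNbr o' q.1 q.2)} = ↑F := by
    ext q
    simp [hF]
  refine ⟨hset ▸ F.finite_toSet, ?_, fun p hp => ?_⟩
  · rw [hset, Nat.card_coe_set_eq, Set.ncard_coe_finset, hcard]
  · simp_rw [abs_dirDiff_rpow T o o' _ (zero_lt_one.trans_le hp).ne', ← hF]
    rw [finsum_eq_sum_of_support_subset (s := F) _ (by intro q; simp)]
    simp [hcard]
end
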